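/- arXiv:2201.07668 — 3 statements merged into one kernel-verified Lean document; each statement's English description precedes it below -/
import Mathlib

section
/- Fix t ∈ (0,1), α > 0, and l ∈ ℤ. For positive integers j ≥ 1, k ≥ 1, m, and any real c with 1/2 − j < c < 0, define b(j,k,m) := −(1/(2π)) ∫_ℝ [ Γ(j−1/2+c+iτ) Γ(k−c−iτ) / (Γ(j−1/2) Γ(k)) ]^m / (c+iτ) dτ, where Γ is the Gamma function on ℂ (the value is independent of the choice of c). Then for any sequences of positive integers (N_i), (j_i), (m_i) with N_i → ∞, 2j_i/N_i → t, m_i/N_i → α, and with k_i := j_i + l (assumed ≥ 1), one has b(j_i, k_i, m_i) → (1/2)[ 1 + erf( (2l+1) √(α/(8t)) ) ] as i → ∞. -/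
open MeasureTheory Filter

/-- The error function `erf x = (2/√π) ∫_0^x e^{-s²} ds`. -/
noncomputable def erf (x : ℝ) : ℝ :=
  (2 / Real.sqrt Real.pi) * ∫ s in (0:ℝ)..x, Real.exp (-s ^ 2)

/-- Contour-integral representation (over the vertical line `Re s = c`) of the
normalized Meijer G-function value
`b_{j,k} = -(1/(2π)) ∫_ℝ [Γ(j-1/2+c+iτ)Γ(k-c-iτ)/(Γ(j-1/2)Γ(k))]^m / (c+iτ) dτ`. -/
noncomputable def bInt (j k m : ℕ) (c : ℝ) : ℂ :=
  -(1 / (2 * (Real.pi : ℂ))) * ∫ τ : ℝ,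
    ((Complex.Gamma ((j : ℂ) - 1 / 2 + (c : ℂ) + (τ : ℂ) * Complex.I) *
        Complex.Gamma ((k : ℂ) - (c : ℂ) - (τ : ℂ) * Complex.I)) /
      (Complex.Gamma ((j : ℂ) - 1 / 2) * Complex.Gamma (k : ℂ))) ^ m /
      ((c : ℂ) + (τ : ℂ) * Complex.I)

/-- The modulus of the Gamma function is maximal on the real axis. -/
theorem Complex.norm_Gamma_le_Gamma_re {z : ℂ} (hz : 0 < z.re) :
    ‖Complex.Gamma z‖ ≤ Real.Gamma z.re := by
  rw [Complex.Gamma_eq_integral hz, Real.Gamma_eq_integral hz, Complex.GammaIntegral]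
  refine (norm_integral_le_integral_norm _).trans_eq ?_
  refine setIntegral_congr_fun measurableSet_Ioi fun x hx => ?_
  have hx' : (0 : ℝ) < x := hx
  simp only [norm_mul, Complex.norm_cpow_eq_rpow_re_of_pos hx', Complex.norm_real,
    Real.norm_eq_abs, abs_of_pos (Real.exp_pos _), Complex.sub_re, Complex.one_re]

theorem Complex.norm_Gamma_mul_norm_le {z : ℂ} (hz : 0 < z.re) :
    ‖Complex.Gamma z‖ * ‖z‖ ≤ Real.Gamma (z.re + 1) := by
  have hz0 : z ≠ 0 := fun h => by simp [h] at hz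
  have h := Complex.norm_Gamma_le_Gamma_re (z := z + 1) (by simp; linarith)
  rwa [Complex.Gamma_add_one z hz0, norm_mul, mul_comm, Complex.add_re, Complex.one_re] at h

/-- Quantitative decay of the Gamma function along vertical lines. -/
theorem Complex.norm_Gamma_sq_mul_pow_le (n : ℕ) {B : ℝ} {z : ℂ} (hz : 0 < z.re)
    (hB : z.re + n ≤ B) :
    ‖Complex.Gamma z‖ ^ 2 * (1 + (z.im / B) ^ 2) ^ n ≤ Real.Gamma z.re ^ 2 := by
  induction n generalizing z with
  | zero =>
    simpa using pow_le_pow_left₀ (norm_nonneg _) (Complex.norm_Gamma_le_Gamma_re hz) 2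
  | succ n ih =>
    have hz0 : z ≠ 0 := fun h => by simp [h] at hz
    push_cast at hB
    have h := ih (z := z + 1) (by simp; linarith) (by simp; linarith)
    rw [Complex.Gamma_add_one z hz0, Complex.add_re, Complex.one_re,
      Real.Gamma_add_one hz.ne', norm_mul, Complex.add_im, Complex.one_im, add_zero] at h
    have hzB : z.re ≤ B := by have : (0 : ℝ) ≤ n := n.cast_nonneg; linarith
    have hnorm : z.re ^ 2 * (1 + (z.im / B) ^ 2) ≤ ‖z‖ ^ 2 := by
      rw [← Complex.normSq_eq_norm_sq, Complex.normSq_apply, div_pow, mul_add, mul_one,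
        ← mul_div_assoc]
      have : z.re ^ 2 * z.im ^ 2 / B ^ 2 ≤ z.im ^ 2 := by
        rw [div_le_iff₀ (pow_pos (hz.trans_le hzB) 2), mul_comm]
        gcongr
      nlinarith
    refine le_of_mul_le_mul_left ?_ (pow_pos hz 2)
    calc z.re ^ 2 * (‖Complex.Gamma z‖ ^ 2 * (1 + (z.im / B) ^ 2) ^ (n + 1))
        = z.re ^ 2 * (1 + (z.im / B) ^ 2) *
            (‖Complex.Gamma z‖ ^ 2 * (1 + (z.im / B) ^ 2) ^ n) := by ring
      _ ≤ ‖z‖ ^ 2 * (‖Complex.Gamma z‖ ^ 2 * (1 + (z.im / B) ^ 2) ^ n) := by gcongr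
      _ = (‖z‖ * ‖Complex.Gamma z‖) ^ 2 * (1 + (z.im / B) ^ 2) ^ n := by ring
      _ ≤ (z.re * Real.Gamma z.re) ^ 2 := h
      _ = _ := by ring

/-- Euler's product for the reciprocal of `Γ(a+s)Γ(b-s)/(Γ(a)Γ(b))`. -/
theorem tendsto_prod_one_add_div (a b : ℝ) (s : ℂ) (ha : 0 < a) (hb : 0 < b)
    (has : 0 < a + s.re) (hbs : 0 < b - s.re) :
    Tendsto (fun n : ℕ => ∏ i ∈ Finset.range (n + 1),
        (1 + (s * (b - a) - s ^ 2) / ((a + i) * (b + i)))) atTop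
      (nhds (Complex.Gamma a * Complex.Gamma b /
        (Complex.Gamma (a + s) * Complex.Gamma (b - s)))) := by
  have h := ((Complex.GammaSeq_tendsto_Gamma a).mul (Complex.GammaSeq_tendsto_Gamma b)).div
    ((Complex.GammaSeq_tendsto_Gamma (a + s)).mul (Complex.GammaSeq_tendsto_Gamma (b - s)))
    (mul_ne_zero (Complex.Gamma_ne_zero_of_re_pos (by simpa using has))
      (Complex.Gamma_ne_zero_of_re_pos (by simpa using hbs)))
  refine h.congr' ?_
  filter_upwards [eventually_ne_atTop 0] with n hn
  have hn' : (n : ℂ) ≠ 0 := by exact_mod_cast hn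
  have key (z : ℂ) (hz : 0 < z.re) (i : ℕ) : z + i ≠ 0 := fun h => by
    have := congrArg Complex.re h
    simp at this
    have : (0 : ℝ) ≤ i := i.cast_nonneg
    linarith
  have k1 := key a (by simpa using ha)
  have k2 := key b (by simpa using hb)
  have k3 := key (a + s) (by simpa using has)
  have k4 := key (b - s) (by simpa using hbs)
  have hprod : ∏ i ∈ Finset.range (n + 1), (1 + (s * (b - a) - s ^ 2) / ((a + i) * (b + i)) : ℂ)
      = ((∏ i ∈ Finset.range (n + 1), ((a : ℂ) + s + i)) *
          ∏ i ∈ Finset.range (n + 1), ((b : ℂ) - s + i)) /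
        ((∏ i ∈ Finset.range (n + 1), ((a : ℂ) + i)) *
          ∏ i ∈ Finset.range (n + 1), ((b : ℂ) + i)) := by
    rw [← Finset.prod_mul_distrib, ← Finset.prod_mul_distrib, ← Finset.prod_div_distrib]
    refine Finset.prod_congr rfl fun i _ => ?_
    have := k1 i
    have := k2 i
    field_simp
    ring
  simp only [Pi.div_apply]
  rw [hprod]
  simp only [Complex.GammaSeq]
  rw [Complex.cpow_add _ _ hn', Complex.cpow_sub _ _ hn']
  have p1 := Finset.prod_ne_zero_iff.2 fun i (_ : i ∈ Finset.range (n + 1)) => k1 i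
  have p2 := Finset.prod_ne_zero_iff.2 fun i (_ : i ∈ Finset.range (n + 1)) => k2 i
  have p3 := Finset.prod_ne_zero_iff.2 fun i (_ : i ∈ Finset.range (n + 1)) => k3 i
  have p4 := Finset.prod_ne_zero_iff.2 fun i (_ : i ∈ Finset.range (n + 1)) => k4 i
  have c1 : (n : ℂ) ^ (a : ℂ) ≠ 0 := by simp [Complex.cpow_eq_zero_iff, hn']
  have c2 : (n : ℂ) ^ (b : ℂ) ≠ 0 := by simp [Complex.cpow_eq_zero_iff, hn']
  have c3 : (n : ℂ) ^ s ≠ 0 := by simp [Complex.cpow_eq_zero_iff, hn']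
  have c4 : ((n.factorial : ℕ) : ℂ) ≠ 0 := by exact_mod_cast n.factorial_ne_zero
  field_simp

theorem norm_one_add_mul_exp_neg_sub_one_le {u v : ℂ} (hv : ‖v‖ ≤ 1) (hu : ‖u‖ ≤ 1) :
    ‖(1 + u) * Complex.exp (-v) - 1‖ ≤ ‖u - v‖ + ‖u‖ * ‖v‖ + 2 * ‖v‖ ^ 2 := by
  have h := Complex.norm_exp_sub_one_sub_id_le (x := -v) (by simpa using hv)
  rw [norm_neg] at h
  have e : (1 + u) * Complex.exp (-v) - 1
      = (u - v) - u * v + (1 + u) * (Complex.exp (-v) - 1 - -v) := by ring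
  rw [e]
  refine (norm_add_le _ _).trans (add_le_add ((norm_sub_le _ _).trans_eq ?_) ?_)
  · rw [norm_mul]
  · rw [norm_mul]
    gcongr
    refine (norm_add_le _ _).trans ?_
    rw [norm_one]
    linarith

/-- Comparison of a single factor of Euler's product with an exponential. -/
theorem exists_norm_factor_sub_one_le (w : ℂ) (lam : ℝ) :
    ∃ C A : ℝ, 0 ≤ C ∧ ∀ x : ℝ, A ≤ x →
      ‖(1 + w / (x * (x + lam))) * Complex.exp (-(w * (1 / x - 1 / (x + 1)))) - 1‖ ≤ C / x ^ 3 := by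
  refine ⟨2 * ‖w‖ * |1 - lam| + 4 * ‖w‖ ^ 2, 1 + 2 * |lam| + 2 * ‖w‖, by positivity,
    fun x hx => ?_⟩
  have hw := norm_nonneg w
  have hl := abs_nonneg lam
  have hl' := neg_abs_le lam
  have hx0 : 0 < x := by linarith
  have hxl : x / 2 ≤ x + lam := by linarith
  have hxl0 : 0 < x + lam := by linarith
  have hv : w * (1 / (x : ℂ) - 1 / (x + 1)) = w / ((x * (x + 1) : ℝ) : ℂ) := by
    have h1 : (x : ℂ) ≠ 0 := by exact_mod_cast hx0.ne'
    have h2 : (x : ℂ) + 1 ≠ 0 := by exact_mod_cast (by linarith : 0 < x + 1).ne'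
    push_cast
    field_simp
    ring
  have hu : w / ((x : ℂ) * (x + lam)) = w / ((x * (x + lam) : ℝ) : ℂ) := by push_cast; rfl
  have huv : w / ((x * (x + lam) : ℝ) : ℂ) - w / ((x * (x + 1) : ℝ) : ℂ)
      = w * ((1 - lam) / (x * (x + 1) * (x + lam)) : ℝ) := by
    have h1 : (x : ℂ) ≠ 0 := by exact_mod_cast hx0.ne'
    have h2 : (x : ℂ) + 1 ≠ 0 := by exact_mod_cast (by linarith : 0 < x + 1).ne'
    have h3 : (x : ℂ) + lam ≠ 0 := by exact_mod_cast hxl0.ne'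
    push_cast
    field_simp
    ring
  have nu : ‖w / ((x * (x + lam) : ℝ) : ℂ)‖ ≤ 2 * ‖w‖ / x ^ 2 := by
    rw [norm_div, Complex.norm_real, Real.norm_of_nonneg (by positivity),
      div_le_div_iff₀ (by positivity) (by positivity)]
    nlinarith [mul_nonneg hw (mul_nonneg hx0.le (sub_nonneg.2 hxl))]
  have nv : ‖w / ((x * (x + 1) : ℝ) : ℂ)‖ ≤ ‖w‖ / x ^ 2 := by
    rw [norm_div, Complex.norm_real, Real.norm_of_nonneg (by positivity)]
    gcongr
    nlinarith
  have nuv : ‖w * (((1 - lam) / (x * (x + 1) * (x + lam)) : ℝ) : ℂ)‖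
      ≤ 2 * ‖w‖ * |1 - lam| / x ^ 3 := by
    rw [norm_mul, Complex.norm_real, Real.norm_eq_abs, abs_div,
      abs_of_pos (by positivity : 0 < x * (x + 1) * (x + lam)), ← mul_div_assoc,
      div_le_div_iff₀ (by positivity) (by positivity)]
    have : x ^ 3 ≤ 2 * (x * (x + 1) * (x + lam)) := by
      nlinarith [mul_nonneg (mul_pos hx0 hx0).le (sub_nonneg.2 hxl), mul_pos hx0 hxl0]
    calc ‖w‖ * |1 - lam| * x ^ 3 ≤ ‖w‖ * |1 - lam| * (2 * (x * (x + 1) * (x + lam))) := by gcongr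
      _ = _ := by ring
  have small : 2 * ‖w‖ / x ^ 2 ≤ 1 := by
    rw [div_le_one (by positivity)]
    nlinarith
  have small' : ‖w‖ / x ^ 2 ≤ 1 := le_trans (by gcongr; linarith) small
  rw [hv, hu]
  refine (norm_one_add_mul_exp_neg_sub_one_le (nv.trans small') (nu.trans small)).trans ?_
  rw [huv]
  have hx1 : 1 ≤ x := by linarith
  calc _ ≤ 2 * ‖w‖ * |1 - lam| / x ^ 3 + 2 * ‖w‖ / x ^ 2 * (‖w‖ / x ^ 2)
        + 2 * (‖w‖ / x ^ 2) ^ 2 := by gcongr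
    _ = 2 * ‖w‖ * |1 - lam| / x ^ 3 + 4 * ‖w‖ ^ 2 / x ^ 4 := by field_simp; ring
    _ ≤ 2 * ‖w‖ * |1 - lam| / x ^ 3 + 4 * ‖w‖ ^ 2 / x ^ 3 := by
        gcongr
        norm_num
    _ = _ := by ring

theorem sum_range_one_div_pow_three_le {a : ℝ} (ha : 1 < a) (n : ℕ) :
    ∑ i ∈ Finset.range n, 1 / (a + i) ^ 3 ≤ 1 / (a * (a - 1)) := by
  have hsum : ∑ i ∈ Finset.range n, 1 / (a + i) ^ 3 ≤ ∑ i ∈ Finset.range n,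
      (1 / ((a + i) * (a + i - 1)) - 1 / ((a + (i + 1 : ℕ)) * (a + (i + 1 : ℕ) - 1))) := by
    refine Finset.sum_le_sum fun i _ => ?_
    have hx : 1 < a + i := by have : (0 : ℝ) ≤ i := i.cast_nonneg; linarith
    push_cast
    rw [← add_assoc]
    generalize a + (i : ℝ) = x at hx
    have h0 : 0 < x := by linarith
    have h1 : 0 < x - 1 := by linarith
    have : 1 / (x * (x - 1)) - 1 / ((x + 1) * (x + 1 - 1)) = 2 / (x * (x - 1) * (x + 1)) := by
      rw [add_sub_cancel_right]
      field_simp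
      ring
    rw [this, div_le_div_iff₀ (by positivity) (by positivity)]
    nlinarith [pow_pos (by linarith : 0 < x) 3]
  refine hsum.trans ?_
  rw [Finset.sum_range_sub' (fun i : ℕ => 1 / ((a + i) * (a + i - 1)))]
  have : 0 ≤ 1 / ((a + n) * (a + n - 1)) := by
    have hx : 1 < a + n := by have : (0 : ℝ) ≤ n := n.cast_nonneg; linarith
    have h1 : 0 < a + n - 1 := by linarith
    positivity
  simp only [Nat.cast_zero, add_zero]
  linarith

/-- Asymptotics of the reciprocal Gamma ratio with an explicit error term. -/
theorem exists_norm_Gamma_ratio_sub_one_le (s : ℂ) (lam : ℝ) :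
    ∃ C A : ℝ, 0 ≤ C ∧ 1 < A ∧ ∀ a : ℝ, A ≤ a →
      ‖Complex.Gamma a * Complex.Gamma (a + lam) /
          (Complex.Gamma (a + s) * Complex.Gamma (a + lam - s)) *
          Complex.exp (-((s * lam - s ^ 2) / a)) - 1‖ ≤
        Real.exp (C / (a * (a - 1))) - 1 := by
  obtain ⟨C, A, hC, hA⟩ := exists_norm_factor_sub_one_le (s * lam - s ^ 2) lam
  set w := s * lam - s ^ 2 with hw
  refine ⟨C, max A (2 + |lam| + ‖s‖), hC, ?_, fun a ha => ?_⟩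
  · refine lt_max_of_lt_right ?_
    have := abs_nonneg lam
    have := norm_nonneg s
    linarith
  have ha1 : A ≤ a := (le_max_left _ _).trans ha
  have ha2 : 2 + |lam| + ‖s‖ ≤ a := (le_max_right _ _).trans ha
  have l1 := neg_abs_le lam
  have l2 := abs_nonneg lam
  have s1 := (abs_le.1 (Complex.abs_re_le_norm s)).1
  have s2 := (abs_le.1 (Complex.abs_re_le_norm s)).2
  have s3 := norm_nonneg s
  have hE := tendsto_prod_one_add_div a (a + lam) s (by linarith) (by linarith) (by linarith)
    (by linarith)
  have hT : Tendsto (fun n : ℕ => Complex.exp (-(w * (1 / (a : ℂ) - 1 / (a + (n + 1 : ℕ))))))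
      atTop (nhds (Complex.exp (-(w / a)))) := by
    have h0 : Tendsto (fun n : ℕ => 1 / ((a : ℂ) + (n + 1 : ℕ))) atTop (nhds 0) := by
      have h1 : Tendsto (fun n : ℕ => a + ((n + 1 : ℕ) : ℝ)) atTop atTop :=
        tendsto_atTop_add_const_left _ _
          (tendsto_natCast_atTop_atTop.comp (tendsto_add_atTop_nat 1))
      have h2 := (Complex.continuous_ofReal.tendsto 0).comp (tendsto_inv_atTop_zero.comp h1)
      simpa [Function.comp_def] using h2
    have h3 := ((h0.const_sub (1 / (a : ℂ))).const_mul w).neg.cexp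
    simpa [div_eq_mul_inv] using h3
  have hlim := ((hE.mul hT).sub_const 1).norm
  push_cast at hlim
  rw [add_sub_cancel_left, ← hw] at hlim
  refine le_of_tendsto hlim (Eventually.of_forall fun n => ?_)
  have hexp : Complex.exp (-(w * (1 / (a : ℂ) - 1 / (a + ((n : ℂ) + 1))))) =
      ∏ i ∈ Finset.range (n + 1),
        Complex.exp (-(w * (1 / ((a + i : ℝ) : ℂ) - 1 / ((a + i : ℝ) + 1)))) := by
    rw [← Complex.exp_sum, Finset.sum_neg_distrib, ← Finset.mul_sum]
    have := Finset.sum_range_sub' (fun i : ℕ => 1 / ((a : ℂ) + i)) (n + 1)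
    push_cast at this ⊢
    simp only [add_zero, ← add_assoc] at this ⊢
    rw [this]
  rw [hexp, ← Finset.prod_mul_distrib]
  have hf := Finset.norm_prod_one_add_sub_one_le (Finset.range (n + 1)) (fun i : ℕ =>
    (1 + w / (((a + i : ℝ) : ℂ) * ((a + i : ℝ) + lam))) *
      Complex.exp (-(w * (1 / ((a + i : ℝ) : ℂ) - 1 / ((a + i : ℝ) + 1)))) - 1)
  simp only [add_sub_cancel] at hf
  have hsum : ∑ i ∈ Finset.range (n + 1), ‖(1 + w / (((a + i : ℝ) : ℂ) * ((a + i : ℝ) + lam))) *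
      Complex.exp (-(w * (1 / ((a + i : ℝ) : ℂ) - 1 / ((a + i : ℝ) + 1)))) - 1‖
      ≤ C / (a * (a - 1)) := by
    calc _ ≤ ∑ i ∈ Finset.range (n + 1), C * (1 / (a + i) ^ 3) := by
          refine Finset.sum_le_sum fun i _ => ?_
          rw [mul_one_div]
          exact hA (a + i) (by have : (0 : ℝ) ≤ i := i.cast_nonneg; linarith)
      _ ≤ C * (1 / (a * (a - 1))) := by
          rw [← Finset.mul_sum]
          exact mul_le_mul_of_nonneg_left
            (sum_range_one_div_pow_three_le (by linarith) _) hC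
      _ = _ := by ring
  refine le_trans (le_of_eq ?_) (hf.trans (sub_le_sub_right (Real.exp_le_exp.2 hsum) 1))
  congr 3
  ext i
  push_cast
  rw [add_right_comm]

/-- Shifting a vertical line of integration inside a strip of holomorphy. -/
theorem integral_vertical_line_eq {f : ℂ → ℂ} {p q K : ℝ} (hpq : p ≤ q)
    (hf : ∀ s : ℂ, s.re ∈ Set.Icc p q → DifferentiableAt ℂ f s)
    (hK : ∀ s : ℂ, s.re ∈ Set.Icc p q → ‖f s‖ ≤ K * (1 + s.im ^ 2)⁻¹) :
    ∫ τ : ℝ, f (p + τ * Complex.I) = ∫ τ : ℝ, f (q + τ * Complex.I) := by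
  have hint (x : ℝ) (hx : x ∈ Set.Icc p q) : Integrable fun τ : ℝ => f (x + τ * Complex.I) := by
    refine (integrable_inv_one_add_sq.const_mul K).mono' ?_ (Eventually.of_forall fun τ => ?_)
    · refine Continuous.aestronglyMeasurable (continuous_iff_continuousAt.2 fun τ => ?_)
      refine ContinuousAt.comp (f := fun τ : ℝ => (x + τ * Complex.I : ℂ)) ?_ (by fun_prop)
      exact (hf _ (by simpa using hx)).continuousAt
    · simpa using hK (x + τ * Complex.I) (by simpa using hx)
  have hor (ε : ℝ) (hε : ε ^ 2 = 1) :
      Tendsto (fun T : ℝ => ∫ x : ℝ in p..q, f (x + (ε * T : ℝ) * Complex.I)) atTop (nhds 0) := by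
    have hz : Tendsto (fun T : ℝ => K * (1 + T ^ 2)⁻¹ * |q - p|) atTop (nhds 0) := by
      have h1 : Tendsto (fun T : ℝ => 1 + T ^ 2) atTop atTop :=
        tendsto_atTop_add_const_left _ _ (tendsto_pow_atTop two_ne_zero)
      simpa using ((tendsto_inv_atTop_zero.comp h1).const_mul K).mul_const |q - p|
    refine squeeze_zero_norm (fun T => ?_) hz
    refine intervalIntegral.norm_integral_le_of_norm_le_const fun x hx => ?_
    rw [Set.uIoc_of_le hpq] at hx
    have := hK (x + (ε * T : ℝ) * Complex.I) (by simpa using ⟨hx.1.le, hx.2⟩)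
    simpa [mul_pow, hε] using this
  have hrect (T : ℝ) :
      (∫ x : ℝ in p..q, f (x + (-1 * T : ℝ) * Complex.I)) -
        (∫ x : ℝ in p..q, f (x + (1 * T : ℝ) * Complex.I)) +
        Complex.I * (∫ y : ℝ in -T..T, f (q + y * Complex.I)) -
        Complex.I * (∫ y : ℝ in -T..T, f (p + y * Complex.I)) = 0 := by
    have := Complex.integral_boundary_rect_eq_zero_of_differentiableOn f
      (p + (-T : ℝ) * Complex.I) (q + (T : ℝ) * Complex.I) (fun s hs => by
        refine (hf s ?_).differentiableWithinAt
        have := (Complex.mem_reProdIm.1 hs).1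
        simpa [Set.uIcc_of_le hpq] using this)
    simpa using this
  have hver (x : ℝ) (hx : x ∈ Set.Icc p q) := intervalIntegral_tendsto_integral (hint x hx)
    tendsto_neg_atTop_atBot tendsto_id
  have hlim := (((hor (-1) (by norm_num)).sub (hor 1 (by norm_num))).add
    ((hver q ⟨hpq, le_rfl⟩).const_mul Complex.I)).sub
    ((hver p ⟨le_rfl, hpq⟩).const_mul Complex.I)
  simp only [id, hrect] at hlim
  have h0 := tendsto_nhds_unique hlim tendsto_const_nhds
  rw [sub_zero, zero_add, ← mul_sub] at h0
  exact (sub_eq_zero.1 ((mul_eq_zero.1 h0).resolve_left Complex.I_ne_zero)).symm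

theorem integral_Ioi_cexp_mul {s : ℂ} (hs : s.re < 0) :
    ∫ u in Set.Ioi (0 : ℝ), Complex.exp (s * u) = -(1 / s) := by
  have := integral_exp_mul_complex_Ioi hs 0
  rw [this]
  simp [neg_div]

/-- A Gaussian tail expressed through the error function. -/
theorem integral_Ioi_exp_neg_sq (x : ℝ) :
    ∫ v in Set.Ioi (-x), Real.exp (-v ^ 2) = Real.sqrt Real.pi / 2 * (1 + erf x) := by
  have hi : Integrable fun v : ℝ => Real.exp (-v ^ 2) := by
    simpa using integrable_exp_neg_mul_sq (b := 1) one_pos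
  have h0 : ∫ v in Set.Ioi (0 : ℝ), Real.exp (-v ^ 2) = Real.sqrt Real.pi / 2 := by
    simpa using integral_gaussian_Ioi 1
  have h1 := intervalIntegral.integral_interval_add_Ioi (a := -x) (b := 0)
    hi.integrableOn hi.integrableOn
  have h2 : ∫ v in (-x)..0, Real.exp (-v ^ 2) = ∫ v in (0 : ℝ)..x, Real.exp (-v ^ 2) := by
    have := intervalIntegral.integral_comp_neg (a := -x) (b := 0)
      (fun v : ℝ => Real.exp (-v ^ 2))
    simpa using this
  have hpi : Real.sqrt Real.pi ≠ 0 := (Real.sqrt_pos.2 Real.pi_pos).ne'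
  rw [← h1, h0, h2, erf]
  field_simp
  ring

/-- The limiting Gaussian contour integral. -/
theorem integral_gaussian_div_eq_erf {β c : ℝ} (hβ : 0 < β) (hc : c < 0) (lam : ℝ) :
    -(1 / (2 * (Real.pi : ℂ))) * ∫ τ : ℝ,
      Complex.exp (-(((c + τ * Complex.I) * lam - (c + τ * Complex.I) ^ 2) * β)) /
        (c + τ * Complex.I) =
    ((1 / 2 * (1 + erf (lam * Real.sqrt β / 2)) : ℝ) : ℂ) := by
  let E : ℝ → ℝ → ℂ := fun τ u =>
    Complex.exp (-(((c + τ * Complex.I) * lam - (c + τ * Complex.I) ^ 2) * β)) *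
      Complex.exp ((c + τ * Complex.I) * u)
  have hquad (τ u : ℝ) : E τ u = Complex.exp (-β * τ ^ 2 +
      (Complex.I * (2 * β * c - β * lam + u)) * τ + (β * c ^ 2 - β * lam * c + c * u)) := by
    simp only [E]
    rw [← Complex.exp_add]
    congr 1
    linear_combination (β * τ ^ 2 : ℂ) * Complex.I_sq
  have hnorm (τ u : ℝ) : ‖E τ u‖ =
      Real.exp (β * c ^ 2 - β * lam * c) * Real.exp (-β * τ ^ 2) * Real.exp (c * u) := by
    rw [hquad, Complex.norm_exp, ← Real.exp_add, ← Real.exp_add]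
    congr 1
    simp [← Complex.ofReal_pow]
    ring
  have hEint : Integrable (Function.uncurry E)
      (volume.prod (volume.restrict (Set.Ioi (0 : ℝ)))) := by
    have h1 : Integrable fun τ : ℝ =>
        Real.exp (β * c ^ 2 - β * lam * c) * Real.exp (-β * τ ^ 2) :=
      (integrable_exp_neg_mul_sq hβ).const_mul _
    have h2 : IntegrableOn (fun u : ℝ => Real.exp (c * u)) (Set.Ioi 0) :=
      integrableOn_exp_mul_Ioi hc 0
    refine (h1.mul_prod h2).mono' ?_ (Eventually.of_forall fun z => ?_)
    · refine Continuous.aestronglyMeasurable ?_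
      simp only [E, Function.uncurry_def]
      fun_prop
    · exact (hnorm z.1 z.2).le
  have hinner (τ : ℝ) : ∫ u in Set.Ioi (0 : ℝ), E τ u =
      -(Complex.exp (-(((c + τ * Complex.I) * lam - (c + τ * Complex.I) ^ 2) * β)) /
        (c + τ * Complex.I)) := by
    simp only [E]
    rw [integral_const_mul, integral_Ioi_cexp_mul (by simpa using hc)]
    ring
  have houter (u : ℝ) : ∫ τ : ℝ, E τ u =
      ((Real.sqrt (Real.pi / β) * Real.exp (-(u / (2 * Real.sqrt β) -
        lam * Real.sqrt β / 2) ^ 2) : ℝ) : ℂ) := by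
    simp only [hquad]
    rw [integral_cexp_quadratic (by simpa using hβ), neg_neg]
    have e1 : ((Real.pi : ℂ) / β) ^ (1 / 2 : ℂ) = (Real.sqrt (Real.pi / β) : ℝ) := by
      rw [Real.sqrt_eq_rpow, Complex.ofReal_cpow (by positivity)]
      push_cast
      rfl
    rw [e1]
    push_cast
    congr 2
    have hs : (Real.sqrt β : ℂ) ^ 2 = β := by
      rw [← Complex.ofReal_pow, Real.sq_sqrt hβ.le]
    have hs0 : (Real.sqrt β : ℂ) ≠ 0 := by exact_mod_cast (Real.sqrt_pos.2 hβ).ne'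
    rw [← hs]
    field_simp
    rw [Complex.I_sq]
    ring
  have hswap := integral_integral_swap hEint
  simp only [hinner, houter] at hswap
  rw [integral_neg] at hswap
  rw [neg_mul, ← mul_neg, hswap, integral_complex_ofReal, integral_const_mul]
  have hsub : ∫ u in Set.Ioi (0 : ℝ), Real.exp (-(u / (2 * Real.sqrt β) -
      lam * Real.sqrt β / 2) ^ 2) = 2 * Real.sqrt β *
      (Real.sqrt Real.pi / 2 * (1 + erf (lam * Real.sqrt β / 2))) := by
    have hpos : 0 < 1 / (2 * Real.sqrt β) := by have := Real.sqrt_pos.2 hβ; positivity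
    have h1 := integral_comp_mul_left_Ioi
      (fun v : ℝ => Real.exp (-(v - lam * Real.sqrt β / 2) ^ 2)) 0 hpos
    have h2 := (measurePreserving_sub_right volume (lam * Real.sqrt β / 2)).setIntegral_preimage_emb
      (measurableEmbedding_subRight _) (fun v : ℝ => Real.exp (-v ^ 2))
      (Set.Ioi (-(lam * Real.sqrt β / 2)))
    simp only [Set.preimage_sub_const_Ioi, neg_add_cancel] at h2
    rw [integral_Ioi_exp_neg_sq] at h2
    rw [mul_zero, h2] at h1
    simp only [one_div_mul_eq_div] at h1
    rw [h1]
    simp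
  rw [hsub]
  have hb := (Real.sqrt_pos.2 hβ).ne'
  have hsq : Real.sqrt Real.pi ^ 2 = Real.pi := Real.sq_sqrt Real.pi_pos.le
  rw [← Complex.ofReal_ofNat, ← Complex.ofReal_one, ← Complex.ofReal_mul, ← Complex.ofReal_div,
    ← Complex.ofReal_mul, Real.sqrt_div Real.pi_pos.le]
  congr 1
  have hp := Real.pi_pos.ne'
  field_simp
  rw [hsq]

/-- The Mellin transform `Γ(a+s)Γ(b-s)/(Γ(a)Γ(b))` of the beta prime distribution. -/
noncomputable def gammaRatio (a b : ℝ) (s : ℂ) : ℂ :=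
  Complex.Gamma (a + s) * Complex.Gamma (b - s) / (Complex.Gamma a * Complex.Gamma b)

theorem bInt_eq_integral_gammaRatio (j k m : ℕ) (c : ℝ) :
    bInt j k m c = -(1 / (2 * (Real.pi : ℂ))) * ∫ τ : ℝ,
      gammaRatio ((j : ℝ) - 1 / 2) k (c + τ * Complex.I) ^ m / (c + τ * Complex.I) := by
  simp only [bInt, gammaRatio]
  push_cast
  simp only [add_assoc, sub_sub]

theorem tendsto_one_add_pow_of_tendsto_zero {ε : ℕ → ℂ} {m : ℕ → ℕ}
    (h : Tendsto (fun i => (m i : ℝ) * ‖ε i‖) atTop (nhds 0)) :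
    Tendsto (fun i => (1 + ε i) ^ m i) atTop (nhds 1) := by
  rw [tendsto_iff_norm_sub_tendsto_zero]
  have hexp : Tendsto (fun i => Real.exp (m i * ‖ε i‖) - 1) atTop (nhds 0) := by
    simpa using h.rexp.sub_const 1
  refine squeeze_zero (fun _ => norm_nonneg _) (fun i => ?_) hexp
  simpa using Finset.norm_prod_one_add_sub_one_le (Finset.range (m i)) fun _ => ε i

theorem tendsto_gammaRatio_pow {a : ℕ → ℝ} {m : ℕ → ℕ} {β : ℝ} (s : ℂ) (lam : ℝ)
    (ha : Tendsto a atTop atTop) (hm : Tendsto (fun i => (m i : ℝ) / a i) atTop (nhds β)) :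
    Tendsto (fun i => gammaRatio (a i) (a i + lam) s ^ m i) atTop
      (nhds (Complex.exp (-((s * lam - s ^ 2) * β)))) := by
  obtain ⟨C, A, hC, hA1, hA⟩ := exists_norm_Gamma_ratio_sub_one_le s lam
  set w := s * lam - s ^ 2
  let ε : ℕ → ℂ := fun i => (gammaRatio (a i) (a i + lam) s)⁻¹ * Complex.exp (-(w / a i)) - 1
  have hx : Tendsto (fun i => C / (a i * (a i - 1))) atTop (nhds 0) :=
    tendsto_const_nhds.div_atTop (ha.atTop_mul_atTop₀ (tendsto_atTop_add_const_right _ (-1) ha))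
  have hmx : Tendsto (fun i => (m i : ℝ) * (2 * (C / (a i * (a i - 1))))) atTop (nhds 0) := by
    have h1 : Tendsto (fun i => 2 * C / (a i - 1)) atTop (nhds 0) :=
      tendsto_const_nhds.div_atTop (tendsto_atTop_add_const_right _ (-1) ha)
    have h2 := hm.mul h1
    rw [mul_zero] at h2
    refine h2.congr fun i => ?_
    rw [div_mul_div_comm]
    ring
  have hε : Tendsto (fun i => (m i : ℝ) * ‖ε i‖) atTop (nhds 0) := by
    refine squeeze_zero' (Eventually.of_forall fun _ => by positivity) ?_ hmx
    filter_upwards [ha.eventually_ge_atTop A, hx.eventually_le_const one_pos] with i hi hi1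
    have h0 : 0 ≤ C / (a i * (a i - 1)) := by
      have : 0 < a i - 1 := by linarith
      have : 0 < a i := by linarith
      positivity
    have h1 := hA (a i) hi
    have h2 := (le_abs_self _).trans (Real.abs_exp_sub_one_le (abs_le.2 ⟨by linarith, hi1⟩))
    rw [abs_of_nonneg h0] at h2
    refine mul_le_mul_of_nonneg_left (le_trans (le_of_eq ?_) (h1.trans h2)) (Nat.cast_nonneg _)
    simp only [ε, gammaRatio, inv_div]
    push_cast
    rfl
  have hmC : Tendsto (fun i => Complex.exp (-(w * ((m i / a i : ℝ) : ℂ)))) atTop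
      (nhds (Complex.exp (-(w * β)))) :=
    (((Complex.continuous_ofReal.tendsto β).comp hm).const_mul w).neg.cexp
  have hlim := ((tendsto_one_add_pow_of_tendsto_zero hε).inv₀ one_ne_zero).mul hmC
  rw [inv_one, one_mul] at hlim
  refine hlim.congr fun i => ?_
  have he : Complex.exp (-(w * ((m i / a i : ℝ) : ℂ))) = Complex.exp (-(w / a i)) ^ m i := by
    rw [← Complex.exp_nat_mul]
    congr 1
    push_cast
    ring
  simp only [ε]
  rw [he, add_sub_cancel, mul_pow, mul_inv, inv_pow, inv_inv, mul_assoc,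
    inv_mul_cancel₀ (pow_ne_zero _ (Complex.exp_ne_zero _)), mul_one]

theorem mul_sqrt_one_add_im_sq_le_norm {δ : ℝ} {z : ℂ} (h0 : 0 ≤ δ) (h1 : δ ≤ 1)
    (hz : δ ≤ |z.re|) : δ * Real.sqrt (1 + z.im ^ 2) ≤ ‖z‖ := by
  refine abs_le_of_sq_le_sq' ?_ (norm_nonneg z) |>.2
  rw [mul_pow, Real.sq_sqrt (by positivity), ← Complex.normSq_eq_norm_sq, Complex.normSq_apply]
  have h2 : δ ^ 2 ≤ z.re ^ 2 := by rw [← sq_abs z.re]; gcongr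
  have h3 : δ ^ 2 ≤ 1 := by nlinarith
  nlinarith [sq_nonneg z.im]

theorem differentiableAt_gammaRatio {a b : ℝ} {s : ℂ} (has : 0 < a + s.re)
    (hbs : 0 < b - s.re) : DifferentiableAt ℂ (gammaRatio a b) s := by
  have hΓ (z : ℂ) (hz : 0 < z.re) : DifferentiableAt ℂ Complex.Gamma z :=
    Complex.differentiableAt_Gamma z fun n h => by
      have := congrArg Complex.re h
      simp at this
      have : (0 : ℝ) ≤ n := n.cast_nonneg
      linarith
  have h1 : DifferentiableAt ℂ (fun s : ℂ => Complex.Gamma (a + s)) s :=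
    (hΓ (a + s) (by simpa using has)).comp s (by fun_prop)
  have h2 : DifferentiableAt ℂ (fun s : ℂ => Complex.Gamma (b - s)) s :=
    (hΓ (b - s) (by simpa using hbs)).comp s (by fun_prop)
  exact (h1.mul h2).div_const _

theorem norm_gammaRatio_sq_mul_pow_le (n : ℕ) {a b c B : ℝ} (τ : ℝ) (hac : 0 < a + c)
    (hbc : 0 < b - c) (hB : a + c + n ≤ B) :
    ‖gammaRatio a b (c + τ * Complex.I)‖ ^ 2 * (1 + (τ / B) ^ 2) ^ n ≤
      ‖gammaRatio a b c‖ ^ 2 := by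
  have h1 := Complex.norm_Gamma_sq_mul_pow_le n (B := B) (z := a + (c + τ * Complex.I))
    (by simpa using hac) (by simpa using hB)
  have h2 := Complex.norm_Gamma_le_Gamma_re (z := b - (c + τ * Complex.I)) (by simpa using hbc)
  have e1 : ‖Complex.Gamma (a + c)‖ = Real.Gamma (a + c) := by
    rw [← Complex.ofReal_add, Complex.Gamma_ofReal, Complex.norm_real,
      Real.norm_of_nonneg (Real.Gamma_pos_of_pos hac).le]
  have e2 : ‖Complex.Gamma (b - c)‖ = Real.Gamma (b - c) := by
    rw [← Complex.ofReal_sub, Complex.Gamma_ofReal, Complex.norm_real,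
      Real.norm_of_nonneg (Real.Gamma_pos_of_pos hbc).le]
  simp only [Complex.add_re, Complex.sub_re, Complex.add_im, Complex.ofReal_re,
    Complex.ofReal_im, Complex.re_ofReal_mul, Complex.im_ofReal_mul, Complex.I_re, Complex.I_im,
    mul_zero, mul_one, add_zero, zero_add] at h1 h2
  simp only [gammaRatio, norm_div, norm_mul, e1, e2, div_pow, mul_pow]
  simp only [div_pow] at h1
  rw [div_mul_eq_mul_div]
  refine div_le_div_of_nonneg_right ?_ (by positivity)
  calc _ = ‖Complex.Gamma (a + (c + τ * Complex.I))‖ ^ 2 * (1 + τ ^ 2 / B ^ 2) ^ n *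
        ‖Complex.Gamma (b - (c + τ * Complex.I))‖ ^ 2 := by ring
    _ ≤ _ := by gcongr

/-- Decay of the Mellin-Barnes integrand, uniform on closed vertical strips. -/
theorem exists_norm_gammaRatio_pow_div_le {a b p q : ℝ} {m : ℕ} (hm : 1 ≤ m) (hap : 0 < a + p)
    (hb : 0 < b) (hpq : p ≤ q) (hq : q < 0) :
    ∃ K : ℝ, ∀ s : ℂ, s.re ∈ Set.Icc p q →
      ‖gammaRatio a b s ^ m / s‖ ≤ K * (1 + s.im ^ 2)⁻¹ := by
  have hcont (x : ℝ) (hx : 0 < x) : ContinuousAt Real.Gamma x :=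
    (Real.differentiableAt_Gamma fun n h => by
      have : (0 : ℝ) ≤ n := n.cast_nonneg
      linarith).continuousAt
  obtain ⟨M₁, hM₁⟩ := isCompact_Icc.exists_bound_of_continuousOn (s := Set.Icc p q)
    (f := fun x => Real.Gamma (a + x + 1)) fun x hx =>
      (ContinuousAt.comp (f := fun x => a + x + 1) (hcont _ (by linarith [hx.1]))
        (by fun_prop)).continuousWithinAt
  obtain ⟨M₂, hM₂⟩ := isCompact_Icc.exists_bound_of_continuousOn (s := Set.Icc p q)
    (f := fun x => Real.Gamma (b - x)) fun x hx =>
      (ContinuousAt.comp (f := fun x => b - x) (hcont _ (by linarith [hx.2]))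
        (by fun_prop)).continuousWithinAt
  have hM₁0 : 0 ≤ M₁ := (norm_nonneg _).trans (hM₁ p ⟨le_rfl, hpq⟩)
  have hM₂0 : 0 ≤ M₂ := (norm_nonneg _).trans (hM₂ p ⟨le_rfl, hpq⟩)
  set G := ‖Complex.Gamma a * Complex.Gamma b‖
  obtain ⟨δ, hδ0, hδ1, hδa, hδq⟩ : ∃ δ : ℝ, 0 < δ ∧ δ ≤ 1 ∧ δ ≤ a + p ∧ δ ≤ -q :=
    ⟨min 1 (min (a + p) (-q)), by simp [hap, hq], by simp, by simp, by simp⟩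
  refine ⟨(M₁ / δ * M₂ / G) ^ (m - 1) * (M₁ * M₂ / G) / δ ^ 2, fun s hs => ?_⟩
  have hre : 0 < ((a : ℂ) + s).re := by simp; linarith [hs.1]
  have hΓ₁ := (Complex.norm_Gamma_mul_norm_le hre).trans
    ((le_abs_self _).trans (by simpa using hM₁ s.re hs))
  have hΓ₂ : ‖Complex.Gamma (b - s)‖ ≤ M₂ :=
    (Complex.norm_Gamma_le_Gamma_re (by simp; linarith [hs.2])).trans
      ((le_abs_self _).trans (by simpa using hM₂ s.re hs))
  have n1 := mul_sqrt_one_add_im_sq_le_norm (z := a + s) hδ0.le hδ1 (by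
    rw [abs_of_pos hre]; simp; linarith [hs.1])
  have n2 := mul_sqrt_one_add_im_sq_le_norm (z := s) hδ0.le hδ1 (by
    rw [abs_of_neg (by linarith [hs.2])]; linarith [hs.2])
  simp only [Complex.add_im, Complex.ofReal_im, zero_add] at n1
  set r := Real.sqrt (1 + s.im ^ 2) with hr
  have hr1 : 1 ≤ r := Real.one_le_sqrt.2 (by nlinarith [sq_nonneg s.im])
  have hr2 : r ^ 2 = 1 + s.im ^ 2 := Real.sq_sqrt (by positivity)
  have hΓ₁' : ‖Complex.Gamma (a + s)‖ ≤ M₁ / (δ * r) := by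
    rw [le_div_iff₀ (by positivity)]
    exact (mul_le_mul_of_nonneg_left n1 (norm_nonneg _)).trans hΓ₁
  have hG : ‖gammaRatio a b s‖ ≤ M₁ / (δ * r) * M₂ / G := by
    rw [gammaRatio, norm_div, norm_mul]
    gcongr
  have hG' : M₁ / (δ * r) * M₂ / G ≤ M₁ / δ * M₂ / G := by
    gcongr
    exact le_mul_of_one_le_right hδ0.le hr1
  obtain ⟨n, rfl⟩ : ∃ n, m = n + 1 := ⟨m - 1, by omega⟩
  rw [norm_div, norm_pow, ← hr2, Nat.add_sub_cancel, pow_succ]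
  calc _ ≤ (M₁ / δ * M₂ / G) ^ n * (M₁ / (δ * r) * M₂ / G) / (δ * r) := by
        gcongr
        exact hG.trans hG'
    _ = _ := by field_simp

theorem integral_gammaRatio_pow_div_eq {a b p q : ℝ} {m : ℕ} (hm : 1 ≤ m) (hb : 0 < b)
    (hap : 0 < a + p) (hp : p < 0) (haq : 0 < a + q) (hq : q < 0) :
    ∫ τ : ℝ, gammaRatio a b (p + τ * Complex.I) ^ m / (p + τ * Complex.I) =
      ∫ τ : ℝ, gammaRatio a b (q + τ * Complex.I) ^ m / (q + τ * Complex.I) := by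
  wlog hpq : p ≤ q generalizing p q
  · exact (this haq hq hap hp (le_of_not_ge hpq)).symm
  obtain ⟨K, hK⟩ := exists_norm_gammaRatio_pow_div_le hm hap hb hpq hq
  refine integral_vertical_line_eq (f := fun s => gammaRatio a b s ^ m / s) hpq
    (fun s hs => ?_) hK
  have hs0 : s ≠ 0 := fun h => by
    have := hs.2
    simp only [h, Complex.zero_re] at this
    linarith
  exact ((differentiableAt_gammaRatio (by linarith [hs.1]) (by linarith [hs.2])).pow m).div
    differentiableAt_id hs0

/-- A Gaussian-type regime yields a dominating function for the Mellin-Barnes integrand. -/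
theorem norm_gammaRatio_pow_div_le {a b c B M κ : ℝ} {m n : ℕ} (τ : ℝ) (hac : 0 < a + c)
    (hb : 0 < b) (hc : c < 0) (hc1 : -1 ≤ c) (hB : a + c + n ≤ B) (hκ : 0 < κ) (hκ1 : κ ≤ 1)
    (hκm : κ ^ 2 ≤ n * m / B ^ 2) (hM : ‖gammaRatio a b c ^ m‖ ≤ M) :
    ‖gammaRatio a b (c + τ * Complex.I) ^ m / (c + τ * Complex.I)‖ ≤
      M / (κ * -c) * (1 + τ ^ 2)⁻¹ := by
  have hM0 : 0 ≤ M := (norm_nonneg _).trans hM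
  have hn := mul_sqrt_one_add_im_sq_le_norm (z := c + τ * Complex.I) (δ := -c) (by linarith)
    (by linarith) (by simp [abs_of_neg hc])
  simp only [Complex.add_im, Complex.ofReal_im, Complex.mul_im, Complex.ofReal_re,
    Complex.I_im, mul_one, Complex.I_re, mul_zero, add_zero, zero_add] at hn
  set r := Real.sqrt (1 + τ ^ 2) with hr
  have hr1 : 1 ≤ r := Real.one_le_sqrt.2 (by nlinarith [sq_nonneg τ])
  have hr2 : r ^ 2 = 1 + τ ^ 2 := Real.sq_sqrt (by positivity)
  have hsq := pow_le_pow_left₀ (by positivity)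
    (norm_gammaRatio_sq_mul_pow_le n (b := b) τ hac (by linarith) hB) m
  have hbern : (κ * r) ^ 2 ≤ ((1 + (τ / B) ^ 2) ^ n) ^ m := by
    rw [← pow_mul]
    have h1 := one_add_mul_le_pow (a := (τ / B) ^ 2) (by nlinarith [sq_nonneg (τ / B)]) (n * m)
    refine le_trans ?_ h1
    push_cast
    have h2 := mul_le_mul_of_nonneg_right hκm (sq_nonneg τ)
    have h3 : (n * m : ℝ) * (τ / B) ^ 2 = n * m / B ^ 2 * τ ^ 2 := by ring
    rw [h3, mul_pow, hr2]
    nlinarith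
  have hmain : ‖gammaRatio a b (c + τ * Complex.I)‖ ^ m * (κ * r) ≤ M := by
    refine abs_le_of_sq_le_sq' ?_ hM0 |>.2
    rw [norm_pow] at hM
    calc _ = (‖gammaRatio a b (c + τ * Complex.I)‖ ^ m) ^ 2 * (κ * r) ^ 2 := by ring
      _ ≤ (‖gammaRatio a b (c + τ * Complex.I)‖ ^ m) ^ 2 * ((1 + (τ / B) ^ 2) ^ n) ^ m := by
          gcongr
      _ = (‖gammaRatio a b (c + τ * Complex.I)‖ ^ 2 * (1 + (τ / B) ^ 2) ^ n) ^ m := by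
          rw [mul_pow, ← pow_mul _ m 2, ← pow_mul _ 2 m, mul_comm m 2]
      _ ≤ (‖gammaRatio a b c‖ ^ 2) ^ m := hsq
      _ = (‖gammaRatio a b c‖ ^ m) ^ 2 := by rw [← pow_mul, ← pow_mul, mul_comm m 2]
      _ ≤ M ^ 2 := by gcongr
  have hc' : 0 < -c := by linarith
  rw [norm_div, norm_pow, ← hr2]
  calc _ ≤ M / (κ * r) / (-c * r) := by
        gcongr
        rwa [le_div_iff₀ (by positivity)]
    _ = _ := by field_simp

/-- For `j = tN/2`, `m = αN`, `k = j + l` with `l` fixed, the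
normalized coefficient `b_{j,k}` converges to `(1/2)[1 + erf((2l+1)√(α/(8t)))]`. -/
theorem bInt_tendsto_erf (t α : ℝ) (ht : t ∈ Set.Ioo (0 : ℝ) 1) (hα : 0 < α) (l : ℤ)
    (N j k m : ℕ → ℕ) (c : ℕ → ℝ)
    (hjpos : ∀ i, 1 ≤ j i) (hkpos : ∀ i, 1 ≤ k i) (hmpos : ∀ i, 1 ≤ m i)
    (hk : ∀ i, (k i : ℤ) = (j i : ℤ) + l)
    (hc : ∀ i, 1 / 2 - (j i : ℝ) < c i ∧ c i < 0)
    (hN : Tendsto N atTop atTop)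
    (hj : Tendsto (fun i => (2 * (j i : ℝ)) / (N i : ℝ)) atTop (nhds t))
    (hm : Tendsto (fun i => (m i : ℝ) / (N i : ℝ)) atTop (nhds α)) :
    Tendsto (fun i => bInt (j i) (k i) (m i) (c i)) atTop
      (nhds (((1 / 2 * (1 + erf ((2 * (l : ℝ) + 1) * Real.sqrt (α / (8 * t)))) : ℝ) : ℂ))) := by
  have ht0 : 0 < t := ht.1
  have hNr : Tendsto (fun i => (N i : ℝ)) atTop atTop := tendsto_natCast_atTop_atTop.comp hN
  have hN0 : ∀ᶠ i in atTop, (N i : ℝ) ≠ 0 := hNr.eventually_ne_atTop 0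
  have hjtop : Tendsto (fun i => (j i : ℝ)) atTop atTop := by
    have h := (hj.pos_mul_atTop ht0 hNr).atTop_div_const (zero_lt_two (α := ℝ))
    refine h.congr' ?_
    filter_upwards [hN0] with i hi
    field_simp
  have hatop : Tendsto (fun i => (j i : ℝ) - 1 / 2) atTop atTop :=
    tendsto_atTop_add_const_right _ _ hjtop
  set β : ℝ := 2 * α / t with hβ
  have hβ0 : 0 < β := by positivity
  have hmj : Tendsto (fun i => (m i : ℝ) / j i) atTop (nhds β) := by
    have h := (hm.const_mul 2).div hj ht0.ne'
    refine h.congr' ?_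
    filter_upwards [hN0, hjtop.eventually_ne_atTop 0] with i hi hi'
    simp only [Pi.div_apply]
    field_simp
  have hma : Tendsto (fun i => (m i : ℝ) / ((j i : ℝ) - 1 / 2)) atTop (nhds β) := by
    have h1 : Tendsto (fun i => 1 - 1 / 2 / (j i : ℝ)) atTop (nhds 1) := by
      simpa using (tendsto_const_nhds (x := (1 / 2 : ℝ))).div_atTop hjtop |>.const_sub 1
    have h2 := hmj.div h1 one_ne_zero
    rw [div_one] at h2
    refine h2.congr' ?_
    filter_upwards [hjtop.eventually_gt_atTop 1] with i hi
    simp only [Pi.div_apply]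
    have : (j i : ℝ) - 1 / 2 ≠ 0 := by linarith
    rw [div_div, mul_sub, mul_one, mul_div_cancel₀ _ (by linarith : (j i : ℝ) ≠ 0)]
  set lam : ℝ := l + 1 / 2 with hlam
  have hka (i : ℕ) : (k i : ℝ) = ((j i : ℝ) - 1 / 2) + lam := by
    have : (k i : ℝ) = (j i : ℝ) + l := by exact_mod_cast hk i
    rw [this, hlam]
    ring
  have hlim (s : ℂ) := tendsto_gammaRatio_pow s lam hatop hma
  simp only [← hka] at hlim
  have hj1 (i : ℕ) : (1 : ℝ) ≤ j i := by exact_mod_cast hjpos i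
  have hk1 (i : ℕ) : (0 : ℝ) < k i := by exact_mod_cast hkpos i
  have hshift (i : ℕ) : bInt (j i) (k i) (m i) (c i) = -(1 / (2 * (Real.pi : ℂ))) * ∫ τ : ℝ,
      gammaRatio ((j i : ℝ) - 1 / 2) (k i) ((-1 / 4 : ℝ) + τ * Complex.I) ^ m i /
        ((-1 / 4 : ℝ) + τ * Complex.I) := by
    rw [bInt_eq_integral_gammaRatio, integral_gammaRatio_pow_div_eq (hmpos i) (hk1 i)
      (by linarith [(hc i).1]) (hc i).2 (q := -1 / 4) (by linarith [hj1 i]) (by norm_num)]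
  simp only [hshift]
  have harg : (2 * (l : ℝ) + 1) * Real.sqrt (α / (8 * t)) = lam * Real.sqrt β / 2 := by
    have : β = 4 ^ 2 * (α / (8 * t)) := by rw [hβ]; field_simp; norm_num
    rw [this, Real.sqrt_mul (by norm_num), Real.sqrt_sq (by norm_num), hlam]
    ring
  rw [harg, ← integral_gaussian_div_eq_erf hβ0 (by norm_num : (-1 / 4 : ℝ) < 0) lam]
  refine Tendsto.const_mul _ ?_
  obtain ⟨M, hM⟩ : ∃ M : ℝ, ∀ᶠ i in atTop,
      ‖gammaRatio ((j i : ℝ) - 1 / 2) (k i) ((-1 / 4 : ℝ) : ℂ) ^ m i‖ ≤ M :=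
    ⟨_, (hlim ((-1 / 4 : ℝ) : ℂ)).norm.eventually_le_const (lt_add_one _)⟩
  obtain ⟨κ, hκ0, hκ1, hκβ⟩ : ∃ κ : ℝ, 0 < κ ∧ κ ≤ 1 ∧ κ < β / 4 :=
    ⟨min 1 (β / 8), by positivity, min_le_left _ _, (min_le_right _ _).trans_lt (by linarith)⟩
  refine tendsto_integral_filter_of_dominated_convergence
    (fun τ : ℝ => M / (κ * -(-1 / 4)) * (1 + τ ^ 2)⁻¹) ?_ ?_
    (integrable_inv_one_add_sq.const_mul _) (Eventually.of_forall fun τ => ?_)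
  · refine Eventually.of_forall fun i => Continuous.aestronglyMeasurable ?_
    have hline : Continuous fun τ : ℝ => ((-1 / 4 : ℝ) + τ * Complex.I : ℂ) := by fun_prop
    refine Continuous.div₀ (Continuous.pow (continuous_iff_continuousAt.2 fun τ => ?_) _) hline
      fun τ h => ?_
    · refine ContinuousAt.comp (f := fun τ : ℝ => ((-1 / 4 : ℝ) + τ * Complex.I : ℂ))
        (DifferentiableAt.continuousAt (𝕜 := ℂ) (differentiableAt_gammaRatio ?_ ?_))
        hline.continuousAt
      · simp only [Complex.add_re, Complex.ofReal_re, Complex.re_ofReal_mul, Complex.I_re]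
        linarith [hj1 i]
      · simp only [Complex.add_re, Complex.ofReal_re, Complex.re_ofReal_mul, Complex.I_re]
        linarith [hk1 i]
    · have := congrArg Complex.re h
      simp only [Complex.add_re, Complex.ofReal_re, Complex.re_ofReal_mul, Complex.I_re,
        Complex.zero_re] at this
      linarith
  · filter_upwards [hM, hmj.eventually_const_le (by linarith : 4 * κ < β)] with i hMi hi
    refine Eventually.of_forall fun τ => norm_gammaRatio_pow_div_le (n := j i)
      (B := 2 * j i) τ (by linarith [hj1 i]) (hk1 i) (by norm_num) (by norm_num)
      (by linarith) hκ0 hκ1 ?_ hMi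
    have : (j i : ℝ) * m i / (2 * j i) ^ 2 = (m i / j i : ℝ) / 4 := by
      have := (zero_lt_one.trans_le (hj1 i)).ne'
      field_simp
      norm_num
    rw [this]
    nlinarith
  · exact (hlim _).div_const _
end

section
/- Fix t ∈ (0,1), α > 0, l ∈ ℤ, and s ∈ ℂ. For any sequences of positive integers (N_i), (j_i), (m_i) with N_i → ∞, 2j_i/N_i → t, m_i/N_i → α, and with k_i := j_i + l (where eventually j_i − 1/2 + Re s > 0 and k_i − Re s > 0), one has [ Γ(j_i − 1/2 + s) Γ(k_i − s) / ( Γ(j_i − 1/2) Γ(k_i) ) ]^{m_i} → exp( (α/t) · s · (2s − 1 − 2l) ) as i → ∞, where Γ is the Gamma function on ℂ. -/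
open Filter

open Topology in
/-- A form of the Stolz–Cesàro theorem with denominators `1 / n`. -/
lemma tendsto_natCast_mul_of_tendsto_mul_sub {f : ℕ → ℂ} {c : ℂ} (hf : Tendsto f atTop (𝓝 0))
    (hd : Tendsto (fun n : ℕ => (n : ℂ) * (n + 1) * (f n - f (n + 1))) atTop (𝓝 c)) :
    Tendsto (fun n : ℕ => (n : ℂ) * f n) atTop (𝓝 c) := by
  rw [Metric.tendsto_atTop]
  intro ε hε
  obtain ⟨M, hM⟩ := Metric.tendsto_atTop.1 hd (ε / 2) (by positivity)
  refine ⟨max M 1, fun n hn => ?_⟩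
  have hnM : M ≤ n := le_trans (le_max_left _ _) hn
  have hn1 : 1 ≤ n := le_trans (le_max_right _ _) hn
  have hn0 : (0 : ℝ) < n := by exact_mod_cast hn1
  set z : ℕ → ℂ := fun k => f k - c / k with hz
  have step : ∀ k, n ≤ k → ‖z k - z (k + 1)‖ ≤ ε / 2 * (1 / (k : ℝ) - 1 / ((k : ℝ) + 1)) := by
    intro k hk
    have hk0 : (0 : ℝ) < k := by exact_mod_cast lt_of_lt_of_le hn1 hk
    have hkc : (k : ℂ) ≠ 0 := by exact_mod_cast hk0.ne'
    have hkc' : (k : ℂ) + 1 ≠ 0 := by exact_mod_cast Nat.succ_ne_zero k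
    have h := (hM k (hnM.trans hk)).le
    rw [dist_eq_norm] at h
    have e : z k - z (k + 1) = ((k : ℂ) * (k + 1) * (f k - f (k + 1)) - c) / (k * (k + 1)) := by
      simp only [hz]; push_cast; field_simp; ring
    have e2 : ‖(k : ℂ) * (k + 1)‖ = (k : ℝ) * (k + 1) := by
      rw [norm_mul, Complex.norm_natCast]
      congr 1
      exact_mod_cast Complex.norm_natCast (k + 1)
    rw [e, norm_div, e2]
    calc _ ≤ ε / 2 / ((k : ℝ) * (k + 1)) := by gcongr
      _ = _ := by field_simp; ring
  have tele : ∀ d : ℕ, ‖z n - z (n + d)‖ ≤ ε / 2 * (1 / (n : ℝ) - 1 / ((n + d : ℕ) : ℝ)) := by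
    intro d
    induction d with
    | zero => simp
    | succ d ih =>
      have h := step (n + d) (by omega)
      have h' := norm_add_le (z n - z (n + d)) (z (n + d) - z (n + d + 1))
      rw [sub_add_sub_cancel] at h'
      rw [← add_assoc]
      push_cast at h ih ⊢
      linarith
  have hz0 : Tendsto (fun d => z (n + d)) atTop (𝓝 0) := by
    have h : Tendsto z atTop (𝓝 0) := by
      simpa using hf.sub (tendsto_const_div_atTop_nhds_zero_nat c)
    simpa only [add_comm] using (tendsto_add_atTop_iff_nat n).2 h
  have hb : ‖z n‖ ≤ ε / 2 * (1 / n) := by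
    have h := (tendsto_const_nhds (x := z n)).sub hz0
    rw [sub_zero] at h
    refine le_of_tendsto h.norm (Eventually.of_forall fun d => (tele d).trans ?_)
    gcongr
    have : (0 : ℝ) ≤ 1 / ((n + d : ℕ) : ℝ) := by positivity
    linarith
  have e : (n : ℂ) * f n - c = n * z n := by
    have : (n : ℂ) ≠ 0 := by exact_mod_cast hn0.ne'
    simp only [hz]; field_simp
  rw [dist_eq_norm, e, norm_mul, Complex.norm_natCast]
  calc _ ≤ (n : ℝ) * (ε / 2 * (1 / n)) := by gcongr
    _ = ε / 2 := by field_simp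
    _ < ε := by linarith

open Topology in
/-- If `x → 1` and `m (x - 1) → L` then `x ^ m → exp L`. -/
lemma tendsto_pow_exp_of_tendsto_mul_sub_one {ι : Type*} {u : Filter ι} {x : ι → ℂ} {m : ι → ℕ}
    {L : ℂ} (hx : Tendsto x u (𝓝 1)) (hm : Tendsto (fun i => (m i : ℂ) * (x i - 1)) u (𝓝 L)) :
    Tendsto (fun i => x i ^ m i) u (𝓝 (Complex.exp L)) := by
  have hd : HasDerivAt Complex.log 1 1 := by
    simpa using Complex.hasDerivAt_log Complex.one_mem_slitPlane
  have hc : Tendsto (fun i => dslope Complex.log 1 (x i)) u (𝓝 1) := by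
    have h := (continuousAt_dslope_same.2 hd.differentiableAt).tendsto.comp hx
    simpa [Function.comp_def, hd.deriv] using h
  have h := (Complex.continuous_exp.tendsto _).comp (hm.mul hc)
  rw [mul_one] at h
  refine h.congr' ?_
  filter_upwards [hx.eventually_ne one_ne_zero] with i hi
  have e := sub_smul_dslope Complex.log 1 (x i)
  rw [Complex.log_one, sub_zero, smul_eq_mul] at e
  rw [Function.comp_apply, mul_assoc, e, Complex.exp_nat_mul, Complex.exp_log hi]

open Topology in
/-- `Γ(n + w) ∼ Γ(n) n ^ w` for `0 < re w`. -/
lemma tendsto_Gamma_natCast_add_div_of_re_pos {w : ℂ} (hw : 0 < w.re) :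
    Tendsto (fun n : ℕ => Complex.Gamma (n + w) / (Complex.Gamma n * (n : ℂ) ^ w))
      atTop (𝓝 1) := by
  have hG := Complex.Gamma_ne_zero_of_re_pos hw
  have h := ((tendsto_const_nhds (x := Complex.Gamma w)).div
    (Complex.GammaSeq_tendsto_Gamma w) hG).mul (tendsto_natCast_div_add_atTop w)
  rw [div_self hG, mul_one] at h
  refine h.congr' ?_
  filter_upwards [eventually_ge_atTop 1] with n hn
  have hn0 : (n : ℂ) ≠ 0 := by exact_mod_cast (by omega : n ≠ 0)
  have hre : ∀ k : ℕ, w ≠ -k := by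
    intro k hk
    have : (0 : ℝ) ≤ k := k.cast_nonneg
    rw [hk] at hw
    simp at hw
    linarith
  have hnw : (n : ℂ) + w ≠ 0 := fun h => hre n (by linear_combination h)
  have hprod : Complex.Gamma (w + (n + 1 : ℕ)) / Complex.Gamma w =
      ∏ i ∈ Finset.range (n + 1), (w + i) := by
    rw [Complex.Gamma_add_nat_div_Gamma_eq w hre]
    generalize n + 1 = r
    induction r with
    | zero => simp
    | succ r ih => rw [ascPochhammer_succ_eval, Finset.prod_range_succ, ih]
  have e1 : Complex.Gamma (w + (n + 1 : ℕ)) = (n + w) * Complex.Gamma (n + w) := by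
    rw [← Complex.Gamma_add_one _ hnw]; congr 1; push_cast; ring
  have e2 : ((n.factorial : ℕ) : ℂ) = n * Complex.Gamma n := by
    rw [← Complex.Gamma_nat_eq_factorial, Complex.Gamma_add_one _ hn0]
  have hGn : Complex.Gamma n ≠ 0 := Complex.Gamma_ne_zero_of_re_pos (by simp; omega)
  have hGnw : Complex.Gamma (n + w) ≠ 0 :=
    Complex.Gamma_ne_zero_of_re_pos (by simp; positivity)
  have hpow : (n : ℂ) ^ w ≠ 0 := by simp [Complex.cpow_eq_zero_iff, hn0]
  simp only [Pi.div_apply]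
  rw [Complex.GammaSeq, e2, ← hprod, e1]
  field_simp

lemma eventually_natCast_add_ne_zero (w : ℂ) : ∀ᶠ n : ℕ in atTop, (n : ℂ) + w ≠ 0 := by
  obtain ⟨M, hM⟩ := exists_nat_gt (-w.re)
  filter_upwards [eventually_ge_atTop M] with n hn h
  have hn' : (M : ℝ) ≤ n := by exact_mod_cast hn
  have := congrArg Complex.re h
  simp at this
  linarith

open Topology in
/-- `Γ(n + w) ∼ Γ(n) n ^ w` for every complex `w`. -/
lemma tendsto_Gamma_natCast_add_div (w : ℂ) :
    Tendsto (fun n : ℕ => Complex.Gamma (n + w) / (Complex.Gamma n * (n : ℂ) ^ w))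
      atTop (𝓝 1) := by
  obtain ⟨K, hK⟩ := exists_nat_gt (-w.re)
  induction K generalizing w with
  | zero => exact tendsto_Gamma_natCast_add_div_of_re_pos (by simpa using hK)
  | succ K ih =>
    have h := (ih (w + 1) (by push_cast at hK; simp; linarith)).mul
      (tendsto_natCast_div_add_atTop w)
    rw [mul_one] at h
    refine h.congr' ?_
    filter_upwards [eventually_ge_atTop 1, eventually_natCast_add_ne_zero w] with n hn hnw
    have hn0 : (n : ℂ) ≠ 0 := by exact_mod_cast (by omega : n ≠ 0)
    rw [← add_assoc, Complex.Gamma_add_one _ hnw, Complex.cpow_add _ _ hn0, Complex.cpow_one]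
    field_simp

open Topology in
/-- A quotient of products of Gamma values whose arguments have equal sums tends to `1`. -/
lemma tendsto_Gamma_mul_div_Gamma_mul {a b a' b' : ℂ} (hab : a + b = a' + b') :
    Tendsto (fun n : ℕ => Complex.Gamma (n + a) * Complex.Gamma (n + b) /
      (Complex.Gamma (n + a') * Complex.Gamma (n + b'))) atTop (𝓝 1) := by
  have h := ((tendsto_Gamma_natCast_add_div a).mul (tendsto_Gamma_natCast_add_div b)).div
    ((tendsto_Gamma_natCast_add_div a').mul (tendsto_Gamma_natCast_add_div b')) (by simp)
  simp only [mul_one, div_one] at h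
  refine h.congr' ?_
  filter_upwards [eventually_ge_atTop 1] with n hn
  have hn0 : (n : ℂ) ≠ 0 := by exact_mod_cast (by omega : n ≠ 0)
  have hGn : Complex.Gamma n ≠ 0 := Complex.Gamma_ne_zero_of_re_pos (by simp; omega)
  have hp : ∀ v : ℂ, (n : ℂ) ^ v ≠ 0 := fun v => by simp [Complex.cpow_eq_zero_iff, hn0]
  have e : (n : ℂ) ^ a * (n : ℂ) ^ b = (n : ℂ) ^ a' * (n : ℂ) ^ b' := by
    rw [← Complex.cpow_add _ _ hn0, ← Complex.cpow_add _ _ hn0, hab]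
  simp only [Pi.div_apply, div_mul_div_comm]
  rw [mul_mul_mul_comm _ ((n : ℂ) ^ a), mul_mul_mul_comm _ ((n : ℂ) ^ a'), e]
  exact div_div_div_cancel_right₀
    (mul_ne_zero (mul_ne_zero hGn hGn) (mul_ne_zero (hp a') (hp b'))) _ _

open Topology in
/-- The first-order term of a Gamma quotient with equal sums of arguments. -/
lemma tendsto_natCast_mul_Gamma_mul_div_sub_one {a b a' b' : ℂ} (hab : a + b = a' + b') :
    Tendsto (fun n : ℕ => (n : ℂ) * (Complex.Gamma (n + a) * Complex.Gamma (n + b) /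
      (Complex.Gamma (n + a') * Complex.Gamma (n + b')) - 1)) atTop (𝓝 (a' * b' - a * b)) := by
  have hF := tendsto_Gamma_mul_div_Gamma_mul hab
  apply tendsto_natCast_mul_of_tendsto_mul_sub
  · simpa using hF.sub_const 1
  have h1 := (tendsto_natCast_div_add_atTop (1 : ℂ)).inv₀ one_ne_zero
  have h := ((hF.mul_const (a' * b' - a * b)).mul (tendsto_natCast_div_add_atTop a')).mul
    ((tendsto_natCast_div_add_atTop b').mul h1)
  simp only [inv_one, mul_one, one_mul] at h
  refine h.congr' ?_
  filter_upwards [eventually_ge_atTop 1, eventually_natCast_add_ne_zero a,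
    eventually_natCast_add_ne_zero b, eventually_natCast_add_ne_zero a',
    eventually_natCast_add_ne_zero b'] with n hn ha hb ha' hb'
  have hn0 : (n : ℂ) ≠ 0 := by exact_mod_cast (by omega : n ≠ 0)
  have hn1 : (n : ℂ) + 1 ≠ 0 := by exact_mod_cast Nat.succ_ne_zero n
  have e : ∀ v : ℂ, (n : ℂ) + v ≠ 0 →
      Complex.Gamma ((n + 1 : ℕ) + v) = (n + v) * Complex.Gamma (n + v) := fun v hv => by
    rw [← Complex.Gamma_add_one _ hv]; congr 1; push_cast; ring
  rw [e a ha, e b hb, e a' ha', e b' hb', mul_mul_mul_comm, mul_mul_mul_comm ((n : ℂ) + a'),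
    mul_div_mul_comm]
  generalize Complex.Gamma (n + a) * Complex.Gamma (n + b) /
      (Complex.Gamma (n + a') * Complex.Gamma (n + b')) = F
  have hb2 : b = a' + b' - a := by linear_combination hab
  subst hb2
  field_simp
  ring

/-- For `j = tN/2`, `m = αN`, `k = j + l` with `l ∈ ℤ` and `s ∈ ℂ` fixed,
`[Γ(j-1/2+s)Γ(k-s)/(Γ(j-1/2)Γ(k))]^m → exp((α/t) s (2s - 1 - 2l))`. -/
theorem gamma_ratio_pow_tendsto (t α : ℝ) (ht : t ∈ Set.Ioo (0 : ℝ) 1) (hα : 0 < α)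
    (l : ℤ) (s : ℂ) (N j k m : ℕ → ℕ)
    (hNpos : ∀ i, 1 ≤ N i) (hjpos : ∀ i, 1 ≤ j i) (hkpos : ∀ i, 1 ≤ k i)
    (hmpos : ∀ i, 1 ≤ m i)
    (hk : ∀ i, (k i : ℤ) = (j i : ℤ) + l)
    (hre : ∀ᶠ i in atTop, 0 < (j i : ℝ) - 1 / 2 + s.re ∧ 0 < (k i : ℝ) - s.re)
    (hN : Tendsto N atTop atTop)
    (hj : Tendsto (fun i => (2 * (j i : ℝ)) / (N i : ℝ)) atTop (nhds t))
    (hm : Tendsto (fun i => (m i : ℝ) / (N i : ℝ)) atTop (nhds α)) :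
    Tendsto (fun i =>
        ((Complex.Gamma ((j i : ℂ) - 1 / 2 + s) * Complex.Gamma ((k i : ℂ) - s)) /
          (Complex.Gamma ((j i : ℂ) - 1 / 2) * Complex.Gamma (k i : ℂ))) ^ (m i))
      atTop
      (nhds (Complex.exp (((α / t : ℝ) : ℂ) * s * (2 * s - 1 - 2 * (l : ℂ))))) := by
  obtain ⟨ht0, -⟩ := ht
  have hNR : Tendsto (fun i => (N i : ℝ)) atTop atTop := tendsto_natCast_atTop_atTop.comp hN
  have hjtop : Tendsto j atTop atTop := by
    rw [← tendsto_natCast_atTop_iff (R := ℝ)]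
    have h := (hj.pos_mul_atTop ht0 hNR).atTop_div_const (zero_lt_two)
    refine h.congr fun i => ?_
    have : (N i : ℝ) ≠ 0 := by exact_mod_cast Nat.one_le_iff_ne_zero.1 (hNpos i)
    field_simp
  have hmj : Tendsto (fun i => (m i : ℝ) / (j i : ℝ)) atTop (nhds (α / t * 2)) := by
    refine ((hm.div hj ht0.ne').mul_const 2).congr fun i => ?_
    have : (N i : ℝ) ≠ 0 := by exact_mod_cast Nat.one_le_iff_ne_zero.1 (hNpos i)
    have : (j i : ℝ) ≠ 0 := by exact_mod_cast Nat.one_le_iff_ne_zero.1 (hjpos i)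
    simp only [Pi.div_apply]
    field_simp
  have hmjC := (Complex.continuous_ofReal.tendsto _).comp hmj
  have hab : (-1 / 2 + s) + (l - s) = -1 / 2 + (l : ℂ) := by ring
  have hF := (tendsto_Gamma_mul_div_Gamma_mul hab).comp hjtop
  have hF' := (tendsto_natCast_mul_Gamma_mul_div_sub_one hab).comp hjtop
  have hkc : ∀ i, (k i : ℂ) = j i + l := fun i => by exact_mod_cast hk i
  have e1 : ∀ i, (j i : ℂ) - 1 / 2 + s = j i + (-1 / 2 + s) := fun i => by ring
  have e2 : ∀ i, (k i : ℂ) - s = j i + (l - s) := fun i => by rw [hkc]; ring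
  have e3 : ∀ i, (j i : ℂ) - 1 / 2 = j i + (-1 / 2) := fun i => by ring
  simp only [e1, e2]
  simp only [e3, hkc]
  refine tendsto_pow_exp_of_tendsto_mul_sub_one hF ?_
  have h := hmjC.mul hF'
  refine (h.congr fun i => ?_).trans_eq ?_
  · have : (j i : ℂ) ≠ 0 := by exact_mod_cast Nat.one_le_iff_ne_zero.1 (hjpos i)
    simp only [Function.comp_apply]
    push_cast
    rw [← mul_assoc, div_mul_cancel₀ _ this]
  · congr 1
    push_cast
    ring
end

section
/- Define c(α) := ∫₀¹ erf(√(α/(8t))) dt, s(α) := ∫₀¹ (α/(8πt)) Σ_{k∈ℤ} ( ∫_{2k−1}^{2k+1} e^{−αx²/(8t)} dx )² dt, and r(α) := 2 − 2 s(α)/c(α) for α > 0. Then lim_{α → 0⁺} r(α) = 2 − √2 and lim_{α → ∞} r(α) = 0. -/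
open MeasureTheory Filter

/-- `c(α) = ∫_0^1 erf(√(α/(8t))) dt`. -/
noncomputable def cFun (α : ℝ) : ℝ :=
  ∫ t in (0:ℝ)..1, erf (Real.sqrt (α / (8 * t)))

/-- `s(α) = ∫_0^1 (α/(8πt)) Σ_{k∈ℤ} (∫_{2k-1}^{2k+1} e^{-αx²/(8t)} dx)² dt`. -/
noncomputable def sFun (α : ℝ) : ℝ :=
  ∫ t in (0:ℝ)..1, (α / (8 * Real.pi * t)) *
    ∑' k : ℤ, (∫ x in (2 * (k : ℝ) - 1)..(2 * (k : ℝ) + 1),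
      Real.exp (-(α * x ^ 2) / (8 * t))) ^ 2

/-- `r(α) = 2 - 2 s(α)/c(α)`. -/
noncomputable def rFun (α : ℝ) : ℝ := 2 - 2 * sFun α / cFun α

open Real Set Topology

/-- The Gaussian integral of parameter `a` over the cell `[2k - 1, 2k + 1]`. -/
noncomputable def gaussCell (a : ℝ) (k : ℤ) : ℝ :=
  ∫ x in (2 * (k : ℝ) - 1)..(2 * (k : ℝ) + 1), Real.exp (-a * x ^ 2)

/-- The integrand of `sFun` as a function of `a = α / (8 t)`. -/
noncomputable def gaussCollision (a : ℝ) : ℝ := a / π * ∑' k : ℤ, gaussCell a k ^ 2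

lemma gaussCell_nonneg (a : ℝ) (k : ℤ) : 0 ≤ gaussCell a k :=
  intervalIntegral.integral_nonneg (by linarith) fun _ _ => (Real.exp_pos _).le

lemma intervalIntegrable_exp_neg_mul_sq (a u v : ℝ) :
    IntervalIntegrable (fun x : ℝ => Real.exp (-a * x ^ 2)) volume u v :=
  Continuous.intervalIntegrable (by fun_prop) _ _

lemma gaussCell_le {a M : ℝ} {k : ℤ}
    (h : ∀ x ∈ Icc (2 * (k : ℝ) - 1) (2 * (k : ℝ) + 1), Real.exp (-a * x ^ 2) ≤ M) :
    gaussCell a k ≤ 2 * M := by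
  have := intervalIntegral.integral_mono_on (by linarith)
    (intervalIntegrable_exp_neg_mul_sq a _ _) intervalIntegrable_const h
  rw [intervalIntegral.integral_const, smul_eq_mul] at this
  unfold gaussCell
  linarith

lemma le_gaussCell {a m : ℝ} {k : ℤ}
    (h : ∀ x ∈ Icc (2 * (k : ℝ) - 1) (2 * (k : ℝ) + 1), m ≤ Real.exp (-a * x ^ 2)) :
    2 * m ≤ gaussCell a k := by
  have := intervalIntegral.integral_mono_on (by linarith)
    intervalIntegrable_const (intervalIntegrable_exp_neg_mul_sq a _ _) h
  rw [intervalIntegral.integral_const, smul_eq_mul] at this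
  unfold gaussCell
  linarith

lemma gaussCell_le_two {a : ℝ} (ha : 0 ≤ a) (k : ℤ) : gaussCell a k ≤ 2 := by
  have : gaussCell a k ≤ 2 * 1 := gaussCell_le fun x _ => by
    rw [Real.exp_le_one_iff]
    nlinarith [mul_nonneg ha (sq_nonneg x)]
  linarith

lemma gaussCell_neg (a : ℝ) (k : ℤ) : gaussCell a (-k) = gaussCell a k := by
  have := intervalIntegral.integral_comp_neg (a := 2 * (k : ℝ) - 1) (b := 2 * (k : ℝ) + 1)
    (fun x : ℝ => Real.exp (-a * x ^ 2))
  simp only [neg_sq] at this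
  unfold gaussCell
  rw [this]
  congr 1 <;> push_cast <;> ring

/-- Cauchy–Schwarz on a cell. -/
lemma gaussCell_sq_le (a : ℝ) (k : ℤ) : gaussCell a k ^ 2 ≤ 2 * gaussCell (2 * a) k := by
  set m := gaussCell a k / 2 with hm
  have h0 : 0 ≤ ∫ x in (2 * (k : ℝ) - 1)..(2 * (k : ℝ) + 1), (Real.exp (-a * x ^ 2) - m) ^ 2 :=
    intervalIntegral.integral_nonneg (by linarith) fun _ _ => sq_nonneg _
  have h1 : (fun x : ℝ => (Real.exp (-a * x ^ 2) - m) ^ 2) = fun x : ℝ =>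
      Real.exp (-(2 * a) * x ^ 2) - (2 * m) * Real.exp (-a * x ^ 2) + m ^ 2 := by
    funext x
    have : Real.exp (-(2 * a) * x ^ 2) = Real.exp (-a * x ^ 2) ^ 2 := by
      rw [← Real.exp_nat_mul]
      congr 1
      push_cast
      ring
    rw [this]
    ring
  have hi := intervalIntegrable_exp_neg_mul_sq
  rw [h1, intervalIntegral.integral_add ((hi _ _ _).sub ((hi _ _ _).const_mul _))
    intervalIntegrable_const, intervalIntegral.integral_sub (hi _ _ _) ((hi _ _ _).const_mul _),
    intervalIntegral.integral_const_mul, intervalIntegral.integral_const, smul_eq_mul] at h0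
  change 0 ≤ gaussCell (2 * a) k - 2 * m * gaussCell a k + _ at h0
  rw [hm] at h0
  nlinarith

/-- The cell `k` dominates the next one, moving away from the origin. -/
lemma two_mul_gaussCell_succ_le {a : ℝ} (ha : 0 ≤ a) (n : ℕ) :
    2 * gaussCell (2 * a) (n + 1) ≤ gaussCell a n ^ 2 := by
  set m := Real.exp (-a * (2 * n + 1) ^ 2) with hm
  have hn : (0 : ℝ) ≤ n := n.cast_nonneg
  have h1 : 2 * m ≤ gaussCell a n := le_gaussCell fun x hx => by
    push_cast at hx
    rw [hm, Real.exp_le_exp]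
    have : x ^ 2 ≤ (2 * n + 1) ^ 2 := sq_le_sq' (by linarith [hx.1]) hx.2
    nlinarith
  have h2 : gaussCell (2 * a) (n + 1) ≤ 2 * m ^ 2 := gaussCell_le fun x hx => by
    push_cast at hx
    rw [hm, ← Real.exp_nat_mul, Real.exp_le_exp]
    have : (2 * n + 1) ^ 2 ≤ x ^ 2 := pow_le_pow_left₀ (by linarith) (by linarith [hx.1]) 2
    push_cast
    nlinarith
  have : 0 < m := Real.exp_pos _
  nlinarith

lemma hasSum_gaussCell {a : ℝ} (ha : 0 < a) : HasSum (gaussCell a) √(π / a) := by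
  have hg := integrable_exp_neg_mul_sq ha
  have hi : Integrable fun x : ℝ => Real.exp (-a * (2 * x - 1) ^ 2) :=
    (hg.comp_sub_right 1).comp_mul_left' two_ne_zero
  have hs := hi.hasSum_intervalIntegral_comp_add_int.mul_left 2
  have hcell : gaussCell a = fun k : ℤ =>
      2 * ∫ x in (0 : ℝ)..1, Real.exp (-a * (2 * (x + k) - 1) ^ 2) := by
    funext k
    have := intervalIntegral.smul_integral_comp_mul_add (a := 0) (b := 1)
      (fun x : ℝ => Real.exp (-a * x ^ 2)) 2 (2 * (k : ℝ) - 1)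
    rw [smul_eq_mul, show (2 * 0 + (2 * (k : ℝ) - 1)) = 2 * k - 1 by ring,
      show (2 * 1 + (2 * (k : ℝ) - 1)) = 2 * k + 1 by ring] at this
    rw [gaussCell, ← this]
    simp only [mul_add, add_sub_assoc]
  have h1 := integral_sub_right_eq_self (μ := volume) (fun x : ℝ => Real.exp (-a * x ^ 2)) 1
  have h2 := Measure.integral_comp_mul_left (fun x : ℝ => Real.exp (-a * (x - 1) ^ 2)) 2
  rw [h2, h1, integral_gaussian, smul_eq_mul, abs_of_pos (by norm_num : (0 : ℝ) < 2⁻¹),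
    mul_inv_cancel_left₀ two_ne_zero] at hs
  rwa [hcell]

lemma summable_gaussCell_sq {a : ℝ} (ha : 0 < a) : Summable fun k => gaussCell a k ^ 2 :=
  Summable.of_nonneg_of_le (fun _ => sq_nonneg _) (gaussCell_sq_le a)
    ((hasSum_gaussCell (by positivity : 0 < 2 * a)).summable.mul_left 2)

lemma tsum_gaussCell_sq_le {a : ℝ} (ha : 0 < a) :
    ∑' k, gaussCell a k ^ 2 ≤ 2 * √(π / (2 * a)) := by
  have h := (hasSum_gaussCell (by positivity : 0 < 2 * a)).mul_left 2
  rw [← h.tsum_eq]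
  exact (summable_gaussCell_sq ha).tsum_le_tsum (gaussCell_sq_le a) h.summable

lemma tsum_int_eq_of_even {f : ℤ → ℝ} (hf : Summable f) (he : ∀ k, f (-k) = f k) :
    ∑' k, f k = f 0 + 2 * ∑' n : ℕ, f (n + 1) := by
  have h1 : Summable fun n : ℕ => f (n + 1) :=
    hf.comp_injective (i := fun n : ℕ => (n + 1 : ℤ)) fun a b h => by simpa using h
  rw [tsum_of_add_one_of_neg_add_one h1 (by simpa only [he] using h1)]
  simp only [he]
  ring

lemma le_tsum_gaussCell_sq {a : ℝ} (ha : 0 < a) :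
    2 * √(π / (2 * a)) - 8 ≤ ∑' k, gaussCell a k ^ 2 := by
  have h := hasSum_gaussCell (by positivity : 0 < 2 * a)
  have hs := summable_gaussCell_sq ha
  have hinj : Function.Injective fun n : ℕ => (n : ℤ) := Nat.cast_injective
  have hinj' : Function.Injective fun n : ℕ => (n + 1 : ℤ) := fun a b h => by simpa using h
  have hsn : Summable fun n : ℕ => gaussCell a n ^ 2 := hs.comp_injective hinj
  have h2 : ∑' n : ℕ, 2 * gaussCell (2 * a) (n + 1) ≤ ∑' n : ℕ, gaussCell a n ^ 2 :=
    ((h.summable.comp_injective hinj').mul_left 2).tsum_le_tsum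
      (two_mul_gaussCell_succ_le ha.le) hsn
  rw [tsum_mul_left] at h2
  rw [hsn.tsum_eq_zero_add] at h2
  push_cast at h2
  rw [← h.tsum_eq, tsum_int_eq_of_even h.summable (gaussCell_neg _),
    tsum_int_eq_of_even hs fun k => by rw [gaussCell_neg]]
  have h3 := gaussCell_le_two (by positivity : 0 ≤ 2 * a) 0
  have h4 := gaussCell_le_two ha.le 0
  have h5 := gaussCell_nonneg a 0
  nlinarith

lemma erf_sqrt_eq {a : ℝ} (ha : 0 < a) : erf √a = √a / √π * gaussCell a 0 := by
  have h1 := intervalIntegral.smul_integral_comp_mul_left (a := 0) (b := 1)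
    (fun s : ℝ => Real.exp (-s ^ 2)) √a
  have h2 : (fun x : ℝ => Real.exp (-(√a * x) ^ 2)) = fun x => Real.exp (-a * x ^ 2) := by
    funext x
    rw [mul_pow, Real.sq_sqrt ha.le, neg_mul]
  have h3 := intervalIntegral.integral_comp_neg (a := -1) (b := 0)
    (fun x : ℝ => Real.exp (-a * x ^ 2))
  have h4 := intervalIntegral.integral_add_adjacent_intervals
    (intervalIntegrable_exp_neg_mul_sq a (-1) 0) (intervalIntegrable_exp_neg_mul_sq a 0 1)
  simp only [neg_sq, neg_neg, neg_zero] at h3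
  rw [h2, mul_zero, mul_one, smul_eq_mul] at h1
  have h5 : gaussCell a 0 = 2 * ∫ x in (0 : ℝ)..1, Real.exp (-a * x ^ 2) := by
    rw [gaussCell]
    norm_num at h4 ⊢
    rw [← h4]
    norm_num at h3
    rw [h3]
    ring
  rw [erf, ← h1, h5]
  ring

lemma sqrt_div_pi_mul_sqrt {a : ℝ} (ha : 0 < a) : √a / √π * √(π / a) = 1 := by
  rw [Real.sqrt_div pi_pos.le]
  have := Real.sqrt_pos.2 ha
  have := Real.sqrt_pos.2 pi_pos
  field_simp

lemma sqrt_div_pi_mul_gaussCell_le_one {a : ℝ} (ha : 0 < a) (k : ℤ) :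
    √a / √π * gaussCell a k ≤ 1 := by
  rw [← sqrt_div_pi_mul_sqrt ha]
  gcongr
  exact le_hasSum (hasSum_gaussCell ha) k fun _ _ => gaussCell_nonneg _ _

lemma gaussCollision_eq {a : ℝ} (ha : 0 < a) :
    gaussCollision a = ∑' k, (√a / √π * gaussCell a k) ^ 2 := by
  simp_rw [mul_pow, div_pow, Real.sq_sqrt ha.le, Real.sq_sqrt pi_pos.le, tsum_mul_left]
  rfl

lemma gaussCollision_nonneg {a : ℝ} (ha : 0 < a) : 0 ≤ gaussCollision a := by
  rw [gaussCollision_eq ha]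
  exact tsum_nonneg fun _ => sq_nonneg _

lemma gaussCollision_le_one {a : ℝ} (ha : 0 < a) : gaussCollision a ≤ 1 := by
  have h := (hasSum_gaussCell ha).mul_left (√a / √π)
  rw [gaussCollision_eq ha, ← sqrt_div_pi_mul_sqrt ha, ← h.tsum_eq]
  refine Summable.tsum_le_tsum (fun k => ?_) ?_ h.summable
  · have h0 : 0 ≤ √a / √π * gaussCell a k := mul_nonneg (by positivity) (gaussCell_nonneg _ _)
    nlinarith [sqrt_div_pi_mul_gaussCell_le_one ha k]
  · simp_rw [mul_pow]
    exact (summable_gaussCell_sq ha).mul_left _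

lemma sq_erf_sqrt_le_gaussCollision {a : ℝ} (ha : 0 < a) : erf √a ^ 2 ≤ gaussCollision a := by
  rw [gaussCollision_eq ha, erf_sqrt_eq ha]
  refine Summable.le_tsum (f := fun k => (√a / √π * gaussCell a k) ^ 2) ?_ 0
    fun _ _ => sq_nonneg _
  simp_rw [mul_pow]
  exact (summable_gaussCell_sq ha).mul_left _

lemma gaussCollision_div_sqrt {a : ℝ} (ha : 0 < a) :
    gaussCollision a / √a = √a / π * ∑' k, gaussCell a k ^ 2 := by
  have h := Real.sqrt_pos.2 ha
  rw [gaussCollision, div_eq_iff h.ne']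
  nth_rewrite 1 [← Real.mul_self_sqrt ha.le]
  ring

lemma sqrt_mul_sqrt_pi_div {a : ℝ} (ha : 0 < a) : √a * √(π / (2 * a)) = √(π / 2) := by
  rw [← Real.sqrt_mul ha.le]
  congr 1
  field_simp

lemma gaussCollision_div_sqrt_le {a : ℝ} (ha : 0 < a) :
    gaussCollision a / √a ≤ 2 / π * √(π / 2) := by
  rw [gaussCollision_div_sqrt ha, ← sqrt_mul_sqrt_pi_div ha]
  calc _ ≤ √a / π * (2 * √(π / (2 * a))) := by gcongr; exact tsum_gaussCell_sq_le ha
    _ = _ := by ring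

lemma le_gaussCollision_div_sqrt {a : ℝ} (ha : 0 < a) :
    2 / π * √(π / 2) - 8 / π * √a ≤ gaussCollision a / √a := by
  rw [gaussCollision_div_sqrt ha, ← sqrt_mul_sqrt_pi_div ha]
  calc _ = √a / π * (2 * √(π / (2 * a)) - 8) := by ring
    _ ≤ _ := by gcongr; exact le_tsum_gaussCell_sq ha

lemma tendsto_gaussCollision_div_sqrt :
    Tendsto (fun a => gaussCollision a / √a) (𝓝[>] 0) (𝓝 (2 / π * √(π / 2))) := by
  have h : Tendsto (fun a => 2 / π * √(π / 2) - 8 / π * √a) (𝓝[>] 0) (𝓝 (2 / π * √(π / 2))) := by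
    have : Continuous fun a => 2 / π * √(π / 2) - 8 / π * √a := by fun_prop
    simpa using (this.tendsto 0).mono_left nhdsWithin_le_nhds
  refine tendsto_of_tendsto_of_tendsto_of_le_of_le' h tendsto_const_nhds ?_ ?_ <;>
    filter_upwards [self_mem_nhdsWithin] with a ha
  exacts [le_gaussCollision_div_sqrt ha, gaussCollision_div_sqrt_le ha]

lemma erf_sqrt_div_sqrt {a : ℝ} (ha : 0 < a) : erf √a / √a = gaussCell a 0 / √π := by
  have h := Real.sqrt_pos.2 ha
  rw [erf_sqrt_eq ha]
  field_simp

lemma erf_sqrt_nonneg {a : ℝ} (ha : 0 < a) : 0 ≤ erf √a := by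
  rw [erf_sqrt_eq ha]
  exact mul_nonneg (by positivity) (gaussCell_nonneg _ _)

lemma erf_sqrt_le_one {a : ℝ} (ha : 0 < a) : erf √a ≤ 1 := by
  rw [erf_sqrt_eq ha]
  exact sqrt_div_pi_mul_gaussCell_le_one ha 0

lemma erf_sqrt_div_sqrt_le {a : ℝ} (ha : 0 < a) : erf √a / √a ≤ 2 / √π := by
  rw [erf_sqrt_div_sqrt ha]
  gcongr
  exact gaussCell_le_two ha.le 0

lemma tendsto_erf_sqrt_div_sqrt :
    Tendsto (fun a => erf √a / √a) (𝓝[>] 0) (𝓝 (2 / √π)) := by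
  have h : Tendsto (fun a => 2 * Real.exp (-a) / √π) (𝓝[>] 0) (𝓝 (2 / √π)) := by
    have : Continuous fun a => 2 * Real.exp (-a) / √π := by fun_prop
    simpa using (this.tendsto 0).mono_left nhdsWithin_le_nhds
  refine tendsto_of_tendsto_of_tendsto_of_le_of_le' h tendsto_const_nhds ?_ ?_ <;>
    filter_upwards [self_mem_nhdsWithin] with a ha
  · rw [erf_sqrt_div_sqrt ha]
    gcongr
    refine le_gaussCell fun x hx => ?_
    norm_num at hx
    rw [Real.exp_le_exp]
    have : x ^ 2 ≤ 1 := by nlinarith [hx.1, hx.2]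
    nlinarith [mem_Ioi.1 ha]
  · exact erf_sqrt_div_sqrt_le ha

lemma continuous_erf : Continuous erf := by
  unfold erf
  exact continuous_const.mul (intervalIntegral.continuous_primitive
    (fun _ _ => Continuous.intervalIntegrable (by fun_prop) _ _) 0)

lemma tendsto_erf_atTop : Tendsto erf atTop (𝓝 1) := by
  have hi := integrable_exp_neg_mul_sq one_pos
  have h := (intervalIntegral_tendsto_integral_Ioi 0 hi.integrableOn tendsto_id).const_mul (2 / √π)
  rw [integral_gaussian_Ioi] at h
  have hp := Real.sqrt_pos.2 pi_pos
  convert h using 2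
  · simp [erf]
  · field_simp

lemma measurable_gaussCollision : Measurable gaussCollision := by
  unfold gaussCollision gaussCell
  refine (measurable_id.div_const π).mul (Measurable.tsum fun k => Measurable.pow_const ?_ 2)
  exact (intervalIntegral.continuous_parametric_intervalIntegral_of_continuous'
    (by fun_prop) _ _).measurable

lemma integral_inv_sqrt_eight_mul :
    IntervalIntegrable (fun t : ℝ => (√(8 * t))⁻¹) volume 0 1 ∧
      ∫ t in (0 : ℝ)..1, (√(8 * t))⁻¹ = (√2)⁻¹ := by
  have h8 : √8 = 2 * √2 := by
    rw [show (8 : ℝ) = 2 ^ 2 * 2 by norm_num, Real.sqrt_mul (by norm_num),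
      Real.sqrt_sq (by norm_num)]
  have he : EqOn (fun t : ℝ => (√8)⁻¹ * t ^ (-(1 / 2) : ℝ)) (fun t : ℝ => (√(8 * t))⁻¹)
      (uIoc 0 1) := fun t ht => by
    rw [uIoc_of_le zero_le_one] at ht
    simp only
    rw [Real.rpow_neg ht.1.le, ← Real.sqrt_eq_rpow, Real.sqrt_mul (by norm_num), mul_inv]
  have hi : IntervalIntegrable (fun t : ℝ => (√8)⁻¹ * t ^ (-(1 / 2) : ℝ)) volume 0 1 :=
    (intervalIntegral.intervalIntegrable_rpow' (by norm_num)).const_mul _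
  refine ⟨hi.congr he, ?_⟩
  rw [← intervalIntegral.integral_congr_ae (ae_of_all _ he), intervalIntegral.integral_const_mul,
    integral_rpow (by norm_num), h8]
  norm_num
  ring

lemma tendsto_integral_div_sqrt {F : ℝ → ℝ} {C L : ℝ} (hF : Measurable F)
    (h0 : ∀ a, 0 < a → 0 ≤ F a) (hC : ∀ a, 0 < a → F a / √a ≤ C)
    (hL : Tendsto (fun a => F a / √a) (𝓝[>] 0) (𝓝 L)) :
    Tendsto (fun α => (∫ t in (0 : ℝ)..1, F (α / (8 * t))) / √α) (𝓝[>] 0) (𝓝 (L * (√2)⁻¹)) := by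
  simp_rw [← intervalIntegral.integral_div]
  have key : ∀ α t : ℝ, 0 < α → 0 < t →
      F (α / (8 * t)) / √α = F (α / (8 * t)) / √(α / (8 * t)) * (√(8 * t))⁻¹ := by
    intro α t hα ht
    have h1 := Real.sqrt_pos.2 hα
    have h2 : 0 < √(8 * t) := Real.sqrt_pos.2 (by positivity)
    rw [Real.sqrt_div hα.le]
    field_simp
  rw [← integral_inv_sqrt_eight_mul.2, ← intervalIntegral.integral_const_mul]
  refine intervalIntegral.tendsto_integral_filter_of_dominated_convergence
    (fun t => C * (√(8 * t))⁻¹) ?_ ?_ (integral_inv_sqrt_eight_mul.1.const_mul C) ?_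
  · refine Eventually.of_forall fun α => Measurable.aestronglyMeasurable ?_
    exact (hF.comp (by fun_prop)).div_const _
  · filter_upwards [self_mem_nhdsWithin] with α hα
    refine ae_of_all _ fun t ht => ?_
    rw [uIoc_of_le zero_le_one] at ht
    have hp : 0 < α / (8 * t) := div_pos hα (by linarith [ht.1])
    rw [Real.norm_of_nonneg (div_nonneg (h0 _ hp) (Real.sqrt_nonneg _)), key α t hα ht.1]
    gcongr
    exact hC _ hp
  · refine ae_of_all _ fun t ht => ?_
    rw [uIoc_of_le zero_le_one] at ht
    have ht8 : 0 < 8 * t := by linarith [ht.1]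
    have hlim : Tendsto (fun α : ℝ => α / (8 * t)) (𝓝[>] 0) (𝓝[>] 0) := by
      refine tendsto_nhdsWithin_iff.2 ⟨?_, ?_⟩
      · have : Continuous fun α : ℝ => α / (8 * t) := by fun_prop
        simpa using (this.tendsto 0).mono_left nhdsWithin_le_nhds
      · filter_upwards [self_mem_nhdsWithin] with α hα
        exact div_pos hα ht8
    refine ((hL.comp hlim).mul_const (√(8 * t))⁻¹).congr' ?_
    filter_upwards [self_mem_nhdsWithin] with α hα
    exact (key α t hα ht.1).symm

lemma tendsto_integral_atTop {F : ℝ → ℝ} (hF : Measurable F)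
    (h0 : ∀ a, 0 < a → 0 ≤ F a) (h1 : ∀ a, 0 < a → F a ≤ 1) (hL : Tendsto F atTop (𝓝 1)) :
    Tendsto (fun α => ∫ t in (0 : ℝ)..1, F (α / (8 * t))) atTop (𝓝 1) := by
  have : (1 : ℝ) = ∫ _ in (0 : ℝ)..1, (1 : ℝ) := by simp
  nth_rewrite 2 [this]
  refine intervalIntegral.tendsto_integral_filter_of_dominated_convergence
    (fun _ => 1) ?_ ?_ intervalIntegrable_const ?_
  · exact Eventually.of_forall fun α =>
      (hF.comp (by fun_prop : Measurable fun t : ℝ => α / (8 * t))).aestronglyMeasurable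
  · filter_upwards [eventually_gt_atTop 0] with α hα
    refine ae_of_all _ fun t ht => ?_
    rw [uIoc_of_le zero_le_one] at ht
    have hp : 0 < α / (8 * t) := div_pos hα (by linarith [ht.1])
    rw [Real.norm_of_nonneg (h0 _ hp)]
    exact h1 _ hp
  · refine ae_of_all _ fun t ht => ?_
    rw [uIoc_of_le zero_le_one] at ht
    exact hL.comp (tendsto_id.atTop_div_const (by linarith [ht.1]))

lemma sFun_eq (α : ℝ) : sFun α = ∫ t in (0 : ℝ)..1, gaussCollision (α / (8 * t)) := by
  unfold sFun gaussCollision gaussCell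
  congr 1
  funext t
  congr 1
  · rw [div_div, mul_right_comm]
  · congr 1
    funext k
    congr 2
    funext x
    ring_nf

lemma measurable_erf_sqrt : Measurable fun a => erf √a :=
  (continuous_erf.comp Real.continuous_sqrt).measurable

lemma tendsto_erf_sqrt_atTop : Tendsto (fun a => erf √a) atTop (𝓝 1) :=
  tendsto_erf_atTop.comp Real.tendsto_sqrt_atTop

lemma tendsto_gaussCollision_atTop : Tendsto gaussCollision atTop (𝓝 1) := by
  have h : Tendsto (fun a => erf √a ^ 2) atTop (𝓝 1) := by
    simpa using tendsto_erf_sqrt_atTop.pow 2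
  refine tendsto_of_tendsto_of_tendsto_of_le_of_le' h tendsto_const_nhds ?_ ?_ <;>
    filter_upwards [eventually_gt_atTop 0] with a ha
  exacts [sq_erf_sqrt_le_gaussCollision ha, gaussCollision_le_one ha]

/-- `r(α) → 2 - √2` as `α → 0⁺` and `r(α) → 0` as `α → ∞`. -/
theorem rFun_asymp :
    Tendsto rFun (nhdsWithin 0 (Set.Ioi 0)) (nhds (2 - Real.sqrt 2)) ∧
      Tendsto rFun atTop (nhds 0) := by
  have hp := Real.sqrt_pos.2 pi_pos
  have h2 : 0 < √2 := by positivity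
  constructor
  · have hs := tendsto_integral_div_sqrt measurable_gaussCollision
      (fun _ => gaussCollision_nonneg) (fun _ => gaussCollision_div_sqrt_le)
      tendsto_gaussCollision_div_sqrt
    have hc := tendsto_integral_div_sqrt measurable_erf_sqrt
      (fun _ => erf_sqrt_nonneg) (fun _ => erf_sqrt_div_sqrt_le) tendsto_erf_sqrt_div_sqrt
    have h := ((hs.const_mul 2).div hc (by positivity)).const_sub 2
    have hlim : 2 * (2 / π * √(π / 2) * (√2)⁻¹) / (2 / √π * (√2)⁻¹) = √2 := by
      rw [Real.sqrt_div pi_pos.le]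
      field_simp
      rw [Real.sq_sqrt pi_pos.le, Real.sq_sqrt zero_le_two]
      ring
    rw [hlim] at h
    refine h.congr' ?_
    filter_upwards [self_mem_nhdsWithin] with α hα
    have := Real.sqrt_pos.2 hα
    rw [rFun, sFun_eq, cFun, Pi.div_apply, ← mul_div_assoc, div_div_div_cancel_right₀ this.ne']
  · have hs := tendsto_integral_atTop measurable_gaussCollision (fun _ => gaussCollision_nonneg)
      (fun _ => gaussCollision_le_one) tendsto_gaussCollision_atTop
    have hc := tendsto_integral_atTop measurable_erf_sqrt (fun _ => erf_sqrt_nonneg)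
      (fun _ => erf_sqrt_le_one) tendsto_erf_sqrt_atTop
    have h := ((hs.const_mul 2).div hc one_ne_zero).const_sub 2
    norm_num at h
    refine h.congr fun α => ?_
    rw [rFun, sFun_eq, cFun]
end
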